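/- Let k be an algebraically closed field of characteristic different from 2, and let R be a smooth affine k-algebra of Krull dimension 3 (the coordinate ring of a smooth affine threefold over k). If P and Q are finitely generated projective R-modules of constant rank 3 that are stably isomorphic, i.e. P ⊕ Rⁿ ≅ Q ⊕ Rⁿ as R-modules for some natural number n, then P ≅ Q. (Uniqueness part of the Mohan Kumar–Murthy classification of rank 3 bundles on smooth affine threefolds, which the paper asserts it reproves by obstruction theory for fields of characteristic ≠ 2 in the Remark following its main classification theorem.) -/

import Mathlib

universe u

/-- A finitely generated projective module has constant rank `r` if its localization at
every prime ideal is free of rank `r`. -/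
def HasConstantRank (R : Type*) [CommRing R] (M : Type*) [AddCommGroup M] [Module R M]
    (r : ℕ) : Prop :=
  ∀ (𝔭 : Ideal R) [𝔭.IsPrime],
    Nonempty (LocalizedModule 𝔭.primeCompl M ≃ₗ[Localization.AtPrime 𝔭]
      (Fin r → Localization.AtPrime 𝔭))


universe v w
open Cardinal in
theorem gp_field {E K ι ρ : Type*} [Field E] [Field K] [Algebra E K] [Fintype ι] [Finite ρ]
    (τ : ι → K) (G : Matrix ρ ι E) (m : ρ → E)
    (hG : ∀ i, ∑ j, G i j • τ j + algebraMap E K (m i) = 0)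
    (hK : ∀ x : K, ∃ a ∈ Algebra.adjoin E (Set.range τ), ∃ b ∈ Algebra.adjoin E (Set.range τ),
      b ≠ 0 ∧ x * b = a) :
    Algebra.trdeg E K + (G.rank : Cardinal) ≤ (Fintype.card ι : Cardinal) := by
  classical
  let L : Submodule E K := Submodule.span E {1}
  let Φ : (ι → E) →ₗ[E] K ⧸ L := L.mkQ ∘ₗ Fintype.linearCombination E τ
  have hker : G.rank ≤ Module.finrank E (LinearMap.ker Φ) := by
    rw [Matrix.rank_eq_finrank_span_row]
    apply Submodule.finrank_mono
    rw [Submodule.span_le]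
    rintro _ ⟨i, rfl⟩
    simp only [SetLike.mem_coe, LinearMap.mem_ker, Φ, LinearMap.comp_apply, Submodule.mkQ_apply,
      Submodule.Quotient.mk_eq_zero, Fintype.linearCombination_apply]
    have h := hG i
    have : ∑ j, G.row i j • τ j = - algebraMap E K (m i) := eq_neg_of_add_eq_zero_left h
    rw [this, Algebra.algebraMap_eq_smul_one, ← neg_smul]
    exact Submodule.smul_mem _ _ (Submodule.subset_span rfl)
  have hrn := LinearMap.finrank_range_add_finrank_ker Φ
  rw [Module.finrank_fintype_fun_eq_card] at hrn
  obtain ⟨b, hb, hbs, hbl⟩ := exists_linearIndependent E (Set.range fun j => (L.mkQ (τ j) : K ⧸ L))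
  have hrange : LinearMap.range Φ = Submodule.span E b := by
    rw [hbs]
    rw [LinearMap.range_comp, Fintype.range_linearCombination, Submodule.map_span, ← Set.range_comp]
    rfl
  have hbf : b.Finite := (Set.finite_range _).subset hb
  let σ : K ⧸ L → K := Function.surjInv L.mkQ_surjective
  let s : Set K := σ '' b
  have hsτ : ∀ j, τ j ∈ Algebra.adjoin E s := by
    intro j
    have h1 : L.mkQ (τ j) ∈ Submodule.span E b := by
      rw [hbs]; exact Submodule.subset_span ⟨j, rfl⟩
    have h2 : b = L.mkQ '' s := by
      rw [Set.image_image]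
      simp [σ, Function.surjInv_eq]
    rw [h2, ← Submodule.map_span] at h1
    obtain ⟨y, hy, hy2⟩ := h1
    have h3 : τ j - y ∈ L := by
      rw [← Submodule.Quotient.mk_eq_zero, Submodule.Quotient.mk_sub, sub_eq_zero]
      exact hy2.symm
    obtain ⟨e, he⟩ := Submodule.mem_span_singleton.1 h3
    have : τ j = y + e • 1 := by rw [he]; ring
    rw [this]
    refine Subalgebra.add_mem _ (Algebra.span_le_adjoin E s hy) (Subalgebra.smul_mem _ (one_mem _) _)
  have hle : Algebra.adjoin E (Set.range τ) ≤ Algebra.adjoin E s := by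
    rw [Algebra.adjoin_le_iff]; rintro _ ⟨j, rfl⟩; exact hsτ j
  have halg : Algebra.IsAlgebraic (Algebra.adjoin E s) K := by
    constructor
    intro x
    obtain ⟨a, ha, c, hc, hc0, h⟩ := hK x
    refine ⟨Polynomial.C ⟨c, hle hc⟩ * Polynomial.X - Polynomial.C ⟨a, hle ha⟩, ?_, ?_⟩
    · intro h0
      have := congrArg (fun p => Polynomial.coeff p 1) h0
      simp at this
      exact hc0 (congrArg Subtype.val this)
    · simp; rw [← h]; ring
  have h1 := Algebra.IsAlgebraic.trdeg_le_cardinalMk E s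
  have h2 : #s ≤ (Module.finrank E (LinearMap.range Φ) : Cardinal) := by
    rw [hrange]
    have := hbf.fintype
    rw [finrank_span_set_eq_card hbl, Set.toFinset_card, ← Cardinal.mk_fintype]
    exact Cardinal.mk_image_le
  calc _ ≤ (Module.finrank E (LinearMap.range Φ) : Cardinal) + (Module.finrank E (LinearMap.ker Φ) : Cardinal) := 
        add_le_add (h1.trans h2) (by exact_mod_cast hker)
    _ ≤ _ := by exact_mod_cast hrn.le

theorem gp_core {k B E K : Type u} [Field k] [CommRing B] [Algebra k B] [Field E] [Field K]
    [Algebra k E] [Algebra k K] [Algebra E K] [IsScalarTower k E K]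
    {ρ τ : Type} [Finite ρ] [Fintype τ] (G : Matrix ρ τ B) (m : ρ → B)
    (e : B →+* E) (π : MvPolynomial τ B →ₐ[k] K)
    (hgb : ∀ b, algebraMap E K (e b) = π (MvPolynomial.C b))
    (hπ : ∀ x : K, ∃ a b, π b ≠ 0 ∧ x * π b = π a)
    (hr : ∀ i, π (∑ j, MvPolynomial.C (G i j) * MvPolynomial.X j + MvPolynomial.C (m i)) = 0)
    (hind : ∀ f : MvPolynomial τ k, f ≠ 0 → π (MvPolynomial.mapAlgHom (Algebra.ofId k B) f) ≠ 0)
    (hlt : Algebra.trdeg k E < ((G.map e).rank : Cardinal)) : False := by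
  let T : τ → K := fun j => π (MvPolynomial.X j)
  have key := gp_field (E := E) (K := K) T (G.map e) (fun i => e (m i)) (by
    intro i
    rw [← hr i]
    simp only [map_add, map_sum, map_mul, Matrix.map_apply, Algebra.smul_def, hgb, T]) (by
    have hin : ∀ y : MvPolynomial τ B, π y ∈ Algebra.adjoin E (Set.range T) := by
      intro y
      induction y using MvPolynomial.induction_on with
      | C b => rw [← hgb]; exact Subalgebra.algebraMap_mem _ _
      | add p q hp hq => rw [map_add]; exact add_mem hp hq
      | mul_X p n hp => rw [map_mul]; exact mul_mem hp (Algebra.subset_adjoin ⟨n, rfl⟩)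
    intro x
    obtain ⟨a, b, hb, hx⟩ := hπ x
    exact ⟨_, hin a, _, hin b, hb, hx⟩)
  have hT : AlgebraicIndependent k T := by
    rw [algebraicIndependent_iff]
    intro f hf
    by_contra hf0
    have h1 : MvPolynomial.aeval T f = π (MvPolynomial.mapAlgHom (Algebra.ofId k B) f) := by
      have : (MvPolynomial.aeval T : MvPolynomial τ k →ₐ[k] K) =
          π.comp (MvPolynomial.mapAlgHom (Algebra.ofId k B)) := by
        apply MvPolynomial.algHom_ext
        intro i; simp [T]
      rw [this]; rfl
    rw [h1] at hf
    exact hind f hf0 hf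
  have hcard := hT.lift_cardinalMk_le_trdeg
  rw [← trdeg_add_eq k E (A := K)] at hcard
  simp only [Cardinal.mk_fintype, Cardinal.lift_natCast, Cardinal.lift_id', Cardinal.lift_uzero] at hcard
  have e1 : Algebra.trdeg k E < Cardinal.aleph0 := hlt.trans (Cardinal.natCast_lt_aleph0)
  have e2 : Algebra.trdeg E K < Cardinal.aleph0 :=
    (le_self_add.trans key).trans_lt (Cardinal.natCast_lt_aleph0)
  obtain ⟨n1, hn1⟩ := Cardinal.lt_aleph0.1 e1
  obtain ⟨n2, hn2⟩ := Cardinal.lt_aleph0.1 e2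
  rw [hn1, hn2] at hcard
  rw [hn2] at key
  rw [hn1] at hlt
  norm_cast at hcard key hlt
  omega

theorem mapₐ_algebraMap' {R A B : Type*} [CommRing R] [CommRing A] [CommRing B] [Algebra R A]
    [Algebra R B] (I : Ideal A) [I.IsPrime] (J : Ideal B) [J.IsPrime]
    (f : A →ₐ[R] B) (hf : I = J.comap f.toRingHom) (x : A) :
    Ideal.ResidueField.mapₐ I J f hf (algebraMap _ _ x) = algebraMap _ _ (f x) :=
  Ideal.ResidueField.map_algebraMap I J _ hf x

theorem lemmaG {k B : Type u} [Field k] [CommRing B] [Algebra k B] (J : Ideal B) (h : B)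
    {ρ τ : Type} [Finite ρ] [Fintype τ] (G : Matrix ρ τ B) (m : ρ → B)
    (H : ∀ (p : Ideal B) [p.IsPrime], J ≤ p → h ∉ p →
      Algebra.trdeg k p.ResidueField < ((G.map (algebraMap B p.ResidueField)).rank : Cardinal)) :
    ∃ f : MvPolynomial τ k, f ≠ 0 ∧ ∀ t : τ → k, MvPolynomial.eval t f ≠ 0 →
      ∀ x : B →ₐ[k] k, (∀ j ∈ J, x j = 0) → x h ≠ 0 →
        ∃ i, ∑ j, x (G i j) * t j + x (m i) ≠ 0 := by
  classical
  let φ : MvPolynomial τ k →ₐ[k] (MvPolynomial τ B) := MvPolynomial.mapAlgHom (Algebra.ofId k B)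
  let r : ρ → (MvPolynomial τ B) := fun i => ∑ j, MvPolynomial.C (G i j) * MvPolynomial.X j + MvPolynomial.C (m i)
  let I : Ideal (MvPolynomial τ B) := J.map MvPolynomial.C ⊔ Ideal.span (Set.range r)
  by_cases hc : ∃ f : MvPolynomial τ k, f ≠ 0 ∧ ∃ n : ℕ, φ f * MvPolynomial.C h ^ n ∈ I
  · obtain ⟨f, hf, n, hn⟩ := hc
    refine ⟨f, hf, fun t ht x hxJ hxh => ?_⟩
    by_contra! hcon
    let ψ : (MvPolynomial τ B) →+* k := MvPolynomial.eval₂Hom (x : B →+* k) t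
    have hI : I ≤ RingHom.ker ψ := by
      refine sup_le ?_ ?_
      · rw [Ideal.map_le_iff_le_comap]
        intro j hj
        simp [RingHom.mem_ker, ψ, hxJ j hj]
      · rw [Ideal.span_le]
        rintro _ ⟨i, rfl⟩
        simpa [RingHom.mem_ker, ψ, r] using hcon i
    have h1 : ψ (φ f * MvPolynomial.C h ^ n) = 0 := hI hn
    have h2 : ψ (φ f) = MvPolynomial.eval t f := by
      have : ψ.comp (φ : MvPolynomial τ k →+* (MvPolynomial τ B)) = MvPolynomial.eval t := by
        apply MvPolynomial.ringHom_ext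
        · intro c; simp [ψ, φ]
        · intro c; simp [ψ, φ]
      exact congrArg (fun g => g f) this
    rw [map_mul, map_pow, h2] at h1
    have h3 : ψ (MvPolynomial.C h) = x h := by simp [ψ]
    rw [h3] at h1
    exact mul_ne_zero ht (pow_ne_zero n hxh) h1
  · exfalso
    push Not at hc
    let S : Submonoid (MvPolynomial τ B) := ((nonZeroDivisors (MvPolynomial τ k)).map φ) ⊔ Submonoid.powers (MvPolynomial.C h)
    have hdis : Disjoint (I : Set (MvPolynomial τ B)) (S : Set (MvPolynomial τ B)) := by
      rw [Set.disjoint_left]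
      intro y hyI hyS
      obtain ⟨_, ⟨f, hf, rfl⟩, _, ⟨n, rfl⟩, rfl⟩ := Submonoid.mem_sup.1 hyS
      exact hc f (nonZeroDivisors.ne_zero hf) n hyI
    obtain ⟨q, hq, hIq, hqS⟩ := Ideal.exists_le_prime_disjoint I S hdis
    let p : Ideal B := q.comap (MvPolynomial.C)
    have hp : p.IsPrime := inferInstance
    let Ca : B →ₐ[k] (MvPolynomial τ B) := IsScalarTower.toAlgHom k B (MvPolynomial τ B)
    let g : p.ResidueField →ₐ[k] q.ResidueField := Ideal.ResidueField.mapₐ p q Ca rfl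
    let _ : Algebra p.ResidueField q.ResidueField := g.toAlgebra
    have _ : IsScalarTower k p.ResidueField q.ResidueField := IsScalarTower.of_algHom g
    have hJp : J ≤ p := by
      rw [← Ideal.map_le_iff_le_comap]; exact le_sup_left.trans hIq
    have hhp : h ∉ p := fun hh => Set.disjoint_left.1 hqS hh
      (Submonoid.mem_sup_right (Submonoid.mem_powers _))
    have hlt := H p hJp hhp
    refine gp_core (k := k) (E := p.ResidueField) (K := q.ResidueField) G m (algebraMap B p.ResidueField)
      (IsScalarTower.toAlgHom k (MvPolynomial τ B) q.ResidueField) ?_ ?_ ?_ ?_ hlt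
    · intro b
      exact mapₐ_algebraMap' p q Ca rfl b
    · intro x
      obtain ⟨a, b, hb, rfl⟩ := IsFractionRing.div_surjective (A := (MvPolynomial τ B) ⧸ q) x
      obtain ⟨a, rfl⟩ := Ideal.Quotient.mk_surjective a
      obtain ⟨b, rfl⟩ := Ideal.Quotient.mk_surjective b
      have hb' : algebraMap (MvPolynomial τ B ⧸ q) q.ResidueField (Ideal.Quotient.mk q b) ≠ 0 :=
        IsFractionRing.to_map_ne_zero_of_mem_nonZeroDivisors hb
      refine ⟨a, b, hb', ?_⟩
      exact div_mul_cancel₀ _ hb'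
    · intro i
      change algebraMap _ _ _ = _
      rw [Ideal.algebraMap_residueField_eq_zero]
      exact hIq (le_sup_right (a := J.map MvPolynomial.C) (Ideal.subset_span ⟨i, rfl⟩))
    · intro f hf0 hf
      change algebraMap _ _ _ = _ at hf
      rw [Ideal.algebraMap_residueField_eq_zero] at hf
      exact Set.disjoint_left.1 hqS hf (Submonoid.mem_sup_left ⟨f, mem_nonZeroDivisors_of_ne_zero hf0, rfl⟩)

theorem trdeg_le_aux {k D K : Type u} [Field k] [CommRing D] [IsDomain D] [Algebra k D]
    [Algebra.FiniteType k D] [Field K] [Algebra k K] [Algebra D K] [IsScalarTower k D K]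
    [IsFractionRing D K] (n : ℕ) (h : ringKrullDim D ≤ n) : Algebra.trdeg k K ≤ (n : Cardinal) := by
  obtain ⟨s, g, hgi, hg⟩ := exists_integral_inj_algHom_of_fg k D
  let _ : Algebra (MvPolynomial (Fin s) k) D := g.toAlgebra
  have _ : IsScalarTower k (MvPolynomial (Fin s) k) D := IsScalarTower.of_algHom g
  have _ : Algebra.IsIntegral (MvPolynomial (Fin s) k) D := ⟨hg⟩
  have _ : FaithfulSMul (MvPolynomial (Fin s) k) D := (faithfulSMul_iff_algebraMap_injective _ _).2 hgi
  have _ : FaithfulSMul D K := (faithfulSMul_iff_algebraMap_injective _ _).2 (IsFractionRing.injective D K)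
  have hs : s ≤ n := by
    have hdim : ringKrullDim (MvPolynomial (Fin s) k) = s := by
      rw [MvPolynomial.ringKrullDim_of_isNoetherianRing, ringKrullDim_eq_zero_of_field]; simp
    obtain ⟨l, hl⟩ := Order.le_krullDim_iff.1 hdim.ge
    obtain ⟨Q, -, hQ, hQc⟩ := Ideal.exists_ideal_over_prime_of_isIntegral (S := D)
      (RelSeries.head l).asIdeal ⊥ (by
        rw [← RingHom.ker_eq_comap_bot, (RingHom.injective_iff_ker_eq_bot (algebraMap (MvPolynomial (Fin s) k) D)).1 hgi]; exact bot_le)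
    have _ : Q.LiesOver (RelSeries.head l).asIdeal := ⟨hQc.symm⟩
    obtain ⟨L, hL, -⟩ := Ideal.exists_ltSeries_of_hasGoingUp l Q
    have : (s : WithBot ℕ∞) ≤ ringKrullDim D := Order.le_krullDim_iff.2 ⟨L, hL.trans hl⟩
    exact_mod_cast this.trans h
  have h1 := trdeg_add_eq k D (A := K)
  have h2 := trdeg_add_eq k (MvPolynomial (Fin s) k) (A := D)
  have _ : Algebra.IsAlgebraic D K := IsLocalization.isAlgebraic _ (nonZeroDivisors D)
  rw [trdeg_eq_zero (R := D), add_zero] at h1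
  rw [trdeg_eq_zero (R := MvPolynomial (Fin s) k), add_zero] at h2
  rw [← h1, ← h2, MvPolynomial.trdeg_of_isDomain]
  simpa using hs

theorem trdeg_le_dim {k A : Type u} [Field k] [CommRing A] [Algebra k A] [Algebra.FiniteType k A]
    (n : ℕ) (h : ringKrullDim A ≤ n) (p : Ideal A) [p.IsPrime] :
    Algebra.trdeg k p.ResidueField ≤ (n : Cardinal) :=
  trdeg_le_aux (D := A ⧸ p) n ((ringKrullDim_quotient_le p).trans h)

theorem trdeg_le_dim' {k A : Type u} [Field k] [CommRing A] [Algebra k A] [Algebra.FiniteType k A]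
    (n : ℕ) (h : ringKrullDim A ≤ n + 1) (s : A) (hs : s ∈ nonZeroDivisors A)
    (p : Ideal A) [p.IsPrime] (hsp : s ∈ p) :
    Algebra.trdeg k p.ResidueField ≤ (n : Cardinal) := by
  refine trdeg_le_aux (D := A ⧸ p) n ?_
  have h1 := (ringKrullDim_quotient_succ_le_of_nonZeroDivisor hs).trans h
  have h2 : ringKrullDim (A ⧸ Ideal.span {s}) ≤ n := by
    have : ∀ x : WithBot ℕ∞, x + 1 ≤ n + 1 → x ≤ n := by
      intro x hx
      induction x with
      | bot => simp
      | coe x =>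
        have hx' : x + 1 ≤ (n : ℕ∞) + 1 := by exact_mod_cast hx
        have : x ≤ (n : ℕ∞) := (ENat.add_le_add_iff_right ENat.one_ne_top).1 hx'
        exact_mod_cast this
    exact this _ h1
  refine le_trans ?_ h2
  exact ringKrullDim_le_of_surjective (Ideal.Quotient.factor ((Ideal.span_singleton_le_iff_mem p).2 hsp))
    (Ideal.Quotient.factor_surjective _)

theorem beta_det {A : Type*} [CommRing A] (x1 x2 b y1 y2 t : A) (h : x1*y1+x2*y2+b*t=1) :
    (!![x1, x2, b^2; -t + y2*(-y1-x2*t), -y1*(-y1-x2*t), y1*b-x2;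
       y2*(-y2+x1*t), -t-y1*(-y2+x1*t), y2*b+x1] : Matrix (Fin 3) (Fin 3) A).det = 1 := by
  rw [Matrix.det_fin_three]
  simp
  grind

def rowF {A : Type*} [CommRing A] (b t h : A) : Matrix (Fin 3) (Fin 3) A :=
  !![b^2, -t, -(b*t); t*b, h, -t^2; t, 0, h]

theorem suslinS {A : Type*} [CommRing A] (α : Matrix (Fin 3) (Fin 3) A) (b ε η : A)
    (h : α.det * ε + b * η = 1) :
    ∃ U : Matrix (Fin 3 ⊕ Unit) (Fin 3 ⊕ Unit) A, IsUnit U.det ∧ ∀ i, U (Sum.inr ()) i = 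
      Sum.elim (α 0) (fun _ => b^3) i := by
  set δ := α.det with hδ
  let t := δ * ε
  let M : Matrix (Fin 3 ⊕ Fin 3) (Fin 3 ⊕ Fin 3) A := Matrix.fromBlocks α (b • 1) (-η • 1) (ε • α.adjugate)
  let M' : Matrix (Fin 3 ⊕ Fin 3) (Fin 3 ⊕ Fin 3) A := Matrix.fromBlocks (ε • α.adjugate) (-b • 1) (η • 1) α
  have hM : IsUnit M.det := by
    apply Matrix.isUnit_det_of_right_inverse (B := M')
    simp only [M, M', Matrix.fromBlocks_multiply]
    rw [← Matrix.fromBlocks_one]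
    congr 1
    · simp [Matrix.mul_adjugate, smul_smul, ← add_smul, ← hδ, mul_comm]; rw [mul_comm ε δ, h, one_smul]
    · simp
    · simp [smul_smul, mul_comm]
    · simp [Matrix.adjugate_mul, smul_smul, ← add_smul, ← hδ, mul_comm]; rw [mul_comm ε δ, add_comm, h, one_smul]
  let F := rowF b t (η * (1 + t))
  have hF : IsUnit F.det := by
    have : F.det = 1 := by
      simp only [F, rowF, Matrix.det_fin_three]
      simp [t]
      grind
    rw [this]; exact isUnit_one
  let X : Matrix (Fin 3) (Fin 3) A := ε • !![0, -b, -b^2; b^2, -t, -(b*t); b, 0, -t]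
  let D : Matrix (Fin 3) (Fin 3) A := Matrix.diagonal ![b^3, 1, 1]
  have hFX : b • F = D + δ • X := by
    ext i j
    fin_cases i <;> fin_cases j <;> simp [F, rowF, X, D, Matrix.diagonal, t] <;> grind
  let L : Matrix (Fin 3) (Fin 3) A := !![0,0,0; α 1 0, α 1 1, α 1 2; α 2 0, α 2 1, α 2 2]
  let N := M * Matrix.fromBlocks 1 0 0 F * Matrix.fromBlocks 1 (-(α.adjugate * X)) 0 1 *
    Matrix.fromBlocks 1 0 (-L) 1
  have hN : IsUnit N.det := by
    simp only [N, Matrix.det_mul, IsUnit.mul_iff]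
    refine ⟨⟨⟨hM, ?_⟩, ?_⟩, ?_⟩
    · simpa using hF
    · simp
    · simp
  have hDL : D * L = L := by
    ext i j
    fin_cases i <;> fin_cases j <;> simp [D, L]
  have hNt : ∃ C Y, N = Matrix.fromBlocks (α - L) D C Y := by
    have e1 : α * (-(α.adjugate * X)) + b • F = D := by
      rw [hFX, mul_neg, ← mul_assoc, Matrix.mul_adjugate, ← hδ]; simp
    have e2 : α + D * (-L) = α - L := by rw [mul_neg, hDL, sub_eq_add_neg]
    refine ⟨N.toBlocks₂₁, N.toBlocks₂₂, ?_⟩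
    conv_lhs => rw [← Matrix.fromBlocks_toBlocks N]
    congr 1
    · simp only [N, M, Matrix.fromBlocks_multiply, Matrix.toBlocks_fromBlocks₁₁, mul_one, mul_zero, add_zero, zero_add, Matrix.smul_mul, one_mul, e1, e2]
    · simp only [N, M, Matrix.fromBlocks_multiply, Matrix.toBlocks_fromBlocks₁₂, mul_one, mul_zero, add_zero, zero_add, Matrix.smul_mul, one_mul, e1]
  obtain ⟨C, Y, hNt⟩ := hNt
  let f1 : (Fin 3 ⊕ Unit) ⊕ Fin 2 → Fin 3 ⊕ Fin 3 :=
    Sum.elim (Sum.elim Sum.inr (fun _ => Sum.inl 0)) (fun j => Sum.inl j.succ)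
  let f2 : (Fin 3 ⊕ Unit) ⊕ Fin 2 → Fin 3 ⊕ Fin 3 :=
    Sum.elim (Sum.elim Sum.inl (fun _ => Sum.inr 0)) (fun j => Sum.inr j.succ)
  let e1 := Equiv.ofBijective f1 (by decide)
  let e2 := Equiv.ofBijective f2 (by decide)
  let N' := N.submatrix e1 e2
  have hN' : IsUnit N'.det := by
    rw [← Matrix.isUnit_iff_isUnit_det] at hN ⊢
    exact (Matrix.isUnit_submatrix_equiv e1 e2).2 hN
  have hB : N' = Matrix.fromBlocks N'.toBlocks₁₁ N'.toBlocks₁₂ 0 1 := by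
    rw [← Matrix.fromBlocks_toBlocks N']
    simp only [Matrix.toBlocks_fromBlocks₁₁, Matrix.toBlocks_fromBlocks₁₂]
    congr 1
    · ext i j
      rcases j with j | j
      · fin_cases i <;> fin_cases j <;> simp [Matrix.toBlocks₂₁, N', e1, e2, f1, f2, hNt, L]
      · fin_cases i <;> simp [Matrix.toBlocks₂₁, N', e1, e2, f1, f2, hNt, D]
    · ext i j
      fin_cases i <;> fin_cases j <;> simp [Matrix.toBlocks₂₂, N', e1, e2, f1, f2, hNt, D]
  refine ⟨N'.toBlocks₁₁, ?_, ?_⟩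
  · rw [hB] at hN'
    simpa using hN'
  · intro i
    rcases i with i | i
    · fin_cases i <;> simp [Matrix.toBlocks₁₁, N', e1, e2, f1, f2, hNt, L]
    · simp [Matrix.toBlocks₁₁, N', e1, e2, f1, f2, hNt, D]

def GEqv {A : Type*} [CommRing A] (v w : Fin 4 → A) : Prop :=
  ∃ g : Matrix (Fin 4) (Fin 4) A, IsUnit g.det ∧ g.mulVec v = w

theorem GEqv.trans {A : Type*} [CommRing A] {v w x : Fin 4 → A} (h : GEqv v w) (h' : GEqv w x) :
    GEqv v x := by
  obtain ⟨g, hg, rfl⟩ := h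
  obtain ⟨g', hg', rfl⟩ := h'
  exact ⟨g' * g, by simpa using ⟨hg', hg⟩, by simp⟩

theorem GEqv.symm {A : Type*} [CommRing A] {v w : Fin 4 → A} (h : GEqv v w) : GEqv w v := by
  obtain ⟨g, hg, rfl⟩ := h
  exact ⟨g⁻¹, by rw [Matrix.isUnit_nonsing_inv_det_iff]; exact hg, by simp [Matrix.nonsing_inv_mul _ hg]⟩

theorem GEqv.unimod {A : Type*} [CommRing A] {v w : Fin 4 → A} (h : GEqv v w)
    (hv : ∃ u, u ⬝ᵥ v = 1) : ∃ u, u ⬝ᵥ w = 1 := by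
  obtain ⟨u, hu⟩ := hv
  obtain ⟨g, hg, rfl⟩ := h.symm
  exact ⟨Matrix.vecMul u g, by rw [← Matrix.dotProduct_mulVec]; exact hu⟩

theorem det4_aux {A : Type*} [CommRing A] (M : Matrix (Fin 4) (Fin 4) A) (h : M.det = 1) :
    IsUnit M.det := h ▸ isUnit_one

theorem GEqv.el1 {A : Type*} [CommRing A] (a b c d p q r : A) :
    GEqv ![a,b,c,d] ![a + p*b+q*c+r*d, b,c,d] :=
  ⟨!![1,p,q,r;0,1,0,0;0,0,1,0;0,0,0,1],
    det4_aux _ (by simp [Matrix.det_succ_row_zero, Fin.sum_univ_succ]), by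
    ext i; fin_cases i <;> simp [Matrix.mulVec, dotProduct, Fin.sum_univ_four]⟩

theorem GEqv.el2 {A : Type*} [CommRing A] (a b c d p q r : A) :
    GEqv ![a,b,c,d] ![a, b + p*a+q*c+r*d,c,d] :=
  ⟨!![1,0,0,0;p,1,q,r;0,0,1,0;0,0,0,1],
    det4_aux _ (by simp [Matrix.det_succ_row_zero, Fin.sum_univ_succ]), by
    ext i; fin_cases i <;> simp [Matrix.mulVec, dotProduct, Fin.sum_univ_four]; ring⟩

theorem GEqv.el3 {A : Type*} [CommRing A] (a b c d p q r : A) :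
    GEqv ![a,b,c,d] ![a, b,c + p*a+q*b+r*d,d] :=
  ⟨!![1,0,0,0;0,1,0,0;p,q,1,r;0,0,0,1],
    det4_aux _ (by simp [Matrix.det_succ_row_zero, Fin.sum_univ_succ]), by
    ext i; fin_cases i <;> simp [Matrix.mulVec, dotProduct, Fin.sum_univ_four]; ring⟩

theorem GEqv.sl {A : Type*} [CommRing A] (a b c d p q r s : A) (h : p * s - q * r = 1) :
    GEqv ![a,b,c,d] ![a, p*b+q*c, r*b+s*c,d] :=
  ⟨!![1,0,0,0;0,p,q,0;0,r,s,0;0,0,0,1],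
    det4_aux _ (by simp [Matrix.det_succ_row_zero, Fin.sum_univ_succ]; grind), by
    ext i; fin_cases i <;> simp [Matrix.mulVec, dotProduct, Fin.sum_univ_four]⟩

theorem GEqv.swap {A : Type*} [CommRing A] (a b c d : A) :
    GEqv ![a,b,c,d] ![b,-a,c,d] :=
  ⟨!![0,1,0,0;-1,0,0,0;0,0,1,0;0,0,0,1],
    det4_aux _ (by simp [Matrix.det_succ_row_zero, Fin.sum_univ_succ]; rfl), by
    ext i; fin_cases i <;> simp [Matrix.mulVec, dotProduct, Fin.sum_univ_four]⟩

theorem GEqv.of_eq1 {A : Type*} [CommRing A] {a b c d : A} (p q r : A) {a' : A}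
    (h : a' = a + p*b+q*c+r*d) : GEqv ![a,b,c,d] ![a', b,c,d] := h ▸ GEqv.el1 a b c d p q r
theorem GEqv.of_eq2 {A : Type*} [CommRing A] {a b c d : A} (p q r : A) {a' : A}
    (h : a' = b + p*a+q*c+r*d) : GEqv ![a,b,c,d] ![a, a',c,d] := h ▸ GEqv.el2 a b c d p q r
theorem GEqv.of_eq3 {A : Type*} [CommRing A] {a b c d : A} (p q r : A) {a' : A}
    (h : a' = c + p*a+q*b+r*d) : GEqv ![a,b,c,d] ![a,b,a',d] := h ▸ GEqv.el3 a b c d p q r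

theorem vas1 {A : Type*} [CommRing A] (a b c x l : A) (hu : ∃ u, u ⬝ᵥ ![a^2,b,c,x] = 1) :
    GEqv ![a^2,b,c,x] ![a^2,b+l*a,c,x] := by
  obtain ⟨u, hu⟩ := hu
  simp [dotProduct, Fin.sum_univ_four] at hu
  set e := u 1
  set w := 1 + l * a * b * e^2 with hw
  have hcop : IsCoprime w (a^4) := by
    apply IsCoprime.pow_right
    exact ⟨1, -(l*b*e^2), by rw [hw]; ring⟩
  obtain ⟨w', μ, hw'⟩ := hcop
  refine (GEqv.sl (a^2) b c x w (-(a^2*μ)) (a^2) w' (by linear_combination hw')).trans ?_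
  refine (GEqv.of_eq2 (μ * c) 0 0 (a' := w * b) (by ring)).trans ?_
  refine (GEqv.of_eq3 (-b) 0 0 (a' := w' * c) (by ring)).trans ?_
  refine (GEqv.of_eq3 ((μ * a^2 + l * a^3 * e^2*w'*μ*b)*c) (l*a*e^2*w'^2*c) 0 (a' := c) (by
    rw [hw] at hw' ⊢
    linear_combination (-c - c * l * a * e^2 * w' * b) * hw')).trans ?_
  refine GEqv.of_eq2 (l*a*(1+b*e)*u 0) (l*a*(1+b*e)*u 2) (l*a*(1+b*e)*u 3) ?_
  rw [hw]
  linear_combination (-(l*a*(1+b*e))) * hu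

theorem vas2 {A : Type*} [CommRing A] (a b c x : A) (hu : ∃ u, u ⬝ᵥ ![a^2,b,c,x] = 1) :
    GEqv ![a^2,b,c,x] ![b^2,a,c,x] := by
  have h1 := vas1 a b c x (-1) hu
  have h2 : GEqv ![a^2,b+-1*a,c,x] ![b^2,b+-1*a,c,x] :=
    GEqv.of_eq1 (b + a) 0 0 (by ring)
  have h12 := h1.trans h2
  have h3 := vas1 b (b+-1*a) c x (-1) (h12.unimod hu)
  have h4 := h12.trans h3
  have e : b + -1*a + -1 * b = -a := by ring
  rw [e] at h4
  refine h4.trans ?_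
  refine ⟨!![1,0,0,0;0,-1,0,0;0,0,1,0;0,0,0,1], ?_, ?_⟩
  · have : (!![1,0,0,0;0,-1,0,0;0,0,1,0;0,0,0,1] : Matrix (Fin 4) (Fin 4) A).det = -1 := by
      simp [Matrix.det_succ_row_zero, Fin.sum_univ_succ]
    rw [this]; exact isUnit_one.neg
  · ext i; fin_cases i <;> simp [Matrix.mulVec, dotProduct, Fin.sum_univ_four]

theorem completion {A : Type*} [CommRing A] (z x1 x2 x3 y0 y1 y2 y3 : A)
    (h : z * y0 + x1 * y1 + x2 * y2 + x3 * y3 = 1) :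
    ∃ g : Matrix (Fin 4) (Fin 4) A, IsUnit g.det ∧ ∀ i, g i 0 = ![z^6, x1, x2, x3] i := by
  let β : Matrix (Fin 3) (Fin 3) A := !![x1, x2, x3^2; -y3 + y2*(-y1-x2*y3), -y1*(-y1-x2*y3), y1*x3-x2;
       y2*(-y2+x1*y3), -y3-y1*(-y2+x1*y3), y2*x3+x1]
  have hβ : ∃ ξ, β.det * 1 + z * ξ = 1 := by
    let π := Ideal.Quotient.mk (Ideal.span {z})
    have hz : π z = 0 := Ideal.Quotient.eq_zero_iff_mem.2 (Ideal.mem_span_singleton_self z)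
    have h1 : π x1 * π y1 + π x2 * π y2 + π x3 * π y3 = 1 := by
      have := congrArg π h
      simpa [hz] using this
    have h2 : π β.det = 1 := by
      rw [RingHom.map_det, ← beta_det _ _ _ _ _ _ h1]
      congr 1
      ext i j
      fin_cases i <;> fin_cases j <;> simp [β]
    have h3 : 1 - β.det ∈ Ideal.span {z} := by
      rw [← Ideal.Quotient.eq_zero_iff_mem]
      change π _ = 0
      rw [map_sub, h2]; simp
    obtain ⟨ξ, hξ⟩ := Ideal.mem_span_singleton'.1 h3
    exact ⟨ξ, by linear_combination hξ⟩
  obtain ⟨ξ, hξ⟩ := hβ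
  obtain ⟨U, hU, hUr⟩ := suslinS β z 1 ξ hξ
  let f1 : Fin 4 → Fin 3 ⊕ Unit := ![Sum.inl 2, Sum.inr (), Sum.inl 0, Sum.inl 1]
  let f2 : Fin 4 → Fin 3 ⊕ Unit := ![Sum.inr (), Sum.inl 2, Sum.inl 0, Sum.inl 1]
  let e1 := Equiv.ofBijective f1 (by decide)
  let e2 := Equiv.ofBijective f2 (by decide)
  let g := U.transpose.submatrix e1 e2
  have hg : IsUnit g.det := by
    rw [← Matrix.isUnit_iff_isUnit_det, Matrix.isUnit_submatrix_equiv, Matrix.isUnit_iff_isUnit_det,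
      Matrix.det_transpose]
    exact hU
  let v0 : Fin 4 → A := Pi.single 0 1
  have h0 : GEqv v0 ![x3^2, z^3, x1, x2] := by
    refine ⟨g, hg, ?_⟩
    ext i
    simp only [v0, Matrix.mulVec_single_one]
    change U (Sum.inr ()) (f1 i) = _
    rw [hUr]
    fin_cases i <;> simp [f1, β]
  have hu0 : ∃ u, u ⬝ᵥ v0 = 1 := ⟨v0, by simp [v0]⟩
  have h1 := h0.trans (vas2 x3 (z^3) x1 x2 (h0.unimod hu0))
  obtain ⟨G, hG, hGv⟩ := h1
  have hcol : ∀ i, G i 0 = ![(z^3)^2, x3, x1, x2] i := by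
    intro i; rw [← hGv]; simp [v0]
  let f3 : Fin 4 → Fin 4 := ![0,2,3,1]
  let e3 := Equiv.ofBijective f3 (by decide)
  refine ⟨G.submatrix e3 (Equiv.refl _), ?_, ?_⟩
  · rw [← Matrix.isUnit_iff_isUnit_det, Matrix.isUnit_submatrix_equiv, Matrix.isUnit_iff_isUnit_det]
    exact hG
  · intro i
    rw [Matrix.submatrix_apply, Equiv.refl_apply, hcol]
    fin_cases i <;> simp [e3, f3]
    ring

theorem completion_rel {A : Type*} [CommRing A] (s : A) (x y : Fin 4 → A)
    (h : ∑ i, x i * y i = 1) (hx : ∀ i, s ∣ x i - ![1,0,0,0] i) (hy : ∀ i, s ∣ y i - ![1,0,0,0] i) :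
    ∃ g γ : Matrix (Fin 4) (Fin 4) A, IsUnit g.det ∧ g = 1 + s • γ ∧
      ∀ i, g i 0 = ![x 0 ^6, x 1, x 2, x 3] i := by
  let S := MvPolynomial (Fin 4 ⊕ Fin 4) ℤ
  let X : Fin 4 → S := fun i => MvPolynomial.X (Sum.inl i)
  let Y : Fin 4 → S := fun i => MvPolynomial.X (Sum.inr i)
  let I : Ideal S := Ideal.span {∑ i, X i * Y i - 1}
  let U := S ⧸ I
  let π : S →+* U := Ideal.Quotient.mk I
  have hU : ∑ i, π (X i) * π (Y i) = 1 := by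
    have : π (∑ i, X i * Y i - 1) = 0 :=
      Ideal.Quotient.eq_zero_iff_mem.2 (Ideal.mem_span_singleton_self _)
    rw [map_sub, map_one, sub_eq_zero, map_sum] at this
    simpa using this
  obtain ⟨G, hG, hGc⟩ := completion (π (X 0)) (π (X 1)) (π (X 2)) (π (X 3)) (π (Y 0)) (π (Y 1))
    (π (Y 2)) (π (Y 3)) (by rw [← hU, Fin.sum_univ_four])
  have key : ∀ (x y : Fin 4 → A), ∑ i, x i * y i = 1 → ∃ φ : U →+* A, (∀ i, φ (π (X i)) = x i) ∧
      (∀ i, φ (π (Y i)) = y i) := by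
    intro x y h
    let ψ : S →+* A := MvPolynomial.eval₂Hom (Int.castRingHom A) (Sum.elim x y)
    have hψx : ∀ i, ψ (X i) = x i := by intro i; simp [ψ, X, S]
    have hψy : ∀ i, ψ (Y i) = y i := by intro i; simp [ψ, Y, S]
    refine ⟨Ideal.Quotient.lift I ψ ?_, ?_, ?_⟩
    · intro a ha
      obtain ⟨c, rfl⟩ := Ideal.mem_span_singleton'.1 ha
      rw [map_mul, map_sub, map_one, map_sum]
      simp [hψx, hψy, h]
    · intro i; exact hψx i
    · intro i; exact hψy i
  let v : Fin 4 → A := ![1,0,0,0]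
  obtain ⟨φ, hφx, hφy⟩ := key x y h
  obtain ⟨ε, hεx, hεy⟩ := key v v (by simp [v, Fin.sum_univ_four])
  let q : A →+* A ⧸ Ideal.span {s} := Ideal.Quotient.mk _
  have hq : ∀ a b : A, s ∣ a - b → q a = q b := by
    intro a b hab
    exact Ideal.Quotient.eq.2 (Ideal.mem_span_singleton.2 hab)
  have hcong : q.comp φ = q.comp ε := by
    apply Ideal.Quotient.ringHom_ext
    apply MvPolynomial.ringHom_ext
    · intro n; simp
    · rintro (i | i)
      · change q (φ (π (X i))) = q (ε (π (X i)))
        rw [hφx, hεx]; exact hq _ _ (hx i)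
      · change q (φ (π (Y i))) = q (ε (π (Y i)))
        rw [hφy, hεy]; exact hq _ _ (hy i)
  let g1 := G.map φ
  let g0 := G.map ε
  have hg1 : IsUnit g1.det := by
    have : g1.det = φ G.det := (RingHom.map_det φ G).symm
    rw [this]; exact hG.map φ
  have hg0 : IsUnit g0.det := by
    have : g0.det = ε G.det := (RingHom.map_det ε G).symm
    rw [this]; exact hG.map ε
  have hd : ∀ i j, ∃ c, g1 i j = g0 i j + s * c := by
    intro i j
    have : q (g1 i j) = q (g0 i j) := congrArg (fun f => f (G i j)) hcong
    obtain ⟨c, hc⟩ := Ideal.mem_span_singleton.1 (Ideal.Quotient.eq.1 this)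
    exact ⟨c, by rw [← hc]; ring⟩
  choose D hD using hd
  have hD' : g1 = g0 + s • Matrix.of D := by
    ext i j; simp [hD]
  have hg0e : g0.mulVec (Pi.single 0 1) = Pi.single 0 1 := by
    ext i
    simp only [Matrix.mulVec_single_one]
    change ε (G i 0) = _
    rw [hGc]
    fin_cases i <;> simp [hεx, v]
  have hinv : g0⁻¹.mulVec (Pi.single 0 1) = Pi.single 0 1 := by
    conv_lhs => rw [← hg0e]
    rw [Matrix.mulVec_mulVec, Matrix.nonsing_inv_mul _ hg0, Matrix.one_mulVec]
  refine ⟨g1 * g0⁻¹, Matrix.of D * g0⁻¹, ?_, ?_, ?_⟩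
  · rw [Matrix.det_mul]
    exact hg1.mul (by rw [Matrix.isUnit_nonsing_inv_det_iff]; exact hg0)
  · rw [hD', add_mul, Matrix.mul_nonsing_inv _ hg0, Matrix.smul_mul]
  · intro i
    have : (g1 * g0⁻¹) i 0 = ((g1 * g0⁻¹).mulVec (Pi.single 0 1)) i := by
      rw [Matrix.mulVec_single_one]; rfl
    rw [this, ← Matrix.mulVec_mulVec, hinv, Matrix.mulVec_single_one]
    change φ (G i 0) = _
    rw [hGc]
    fin_cases i <;> simp [hφx]

open scoped IntermediateField.algebraAdjoinAdjoin in
lemma trdeg_eq_rank_kaehler {k K : Type u} [Field k] [PerfectField k] [Field K] [Algebra k K]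
    [Algebra.EssFiniteType k K] : Algebra.trdeg k K = Module.rank K Ω[K⁄k] := by
  obtain ⟨s, hs, H⟩ := exists_isTranscendenceBasis_and_isSeparable_of_perfectField k K
  have H' : Algebra.IsSeparable (↥(IntermediateField.adjoin k (Set.range ((↑) : s → K)))) K := by
    convert! H <;> simp
  have hb := hs.1
  letI a1 : Algebra (MvPolynomial s k) (Algebra.adjoin k (Set.range ((↑) : s → K))) :=
    hb.aevalEquiv.toAlgHom.toRingHom.toAlgebra
  letI a2 : Algebra (MvPolynomial s k) K := (MvPolynomial.aeval ((↑) : s → K)).toRingHom.toAlgebra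
  haveI : IsScalarTower k (MvPolynomial s k) K := IsScalarTower.of_algebraMap_eq' (by
    ext x; simp [RingHom.algebraMap_toAlgebra])
  haveI : IsScalarTower (MvPolynomial s k) (Algebra.adjoin k (Set.range ((↑) : s → K))) K :=
    IsScalarTower.of_algebraMap_eq (by
      intro x
      change MvPolynomial.aeval ((↑) : s → K) x = ((hb.aevalEquiv x : _) : K)
      simp)
  have e1 : Algebra.FormallyEtale (MvPolynomial s k)
      (Algebra.adjoin k (Set.range ((↑) : s → K))) :=
    Algebra.FormallyEtale.of_equiv
      (AlgEquiv.ofRingEquiv (f := hb.aevalEquiv.toRingEquiv) (fun x => rfl) :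
        (MvPolynomial s k) ≃ₐ[MvPolynomial s k] _)
  have e2 : Algebra.FormallyEtale (Algebra.adjoin k (Set.range ((↑) : s → K)))
      (IntermediateField.adjoin k (Set.range ((↑) : s → K))) :=
    .of_isLocalization (nonZeroDivisors _)
  have e3 : Algebra.FormallyEtale (IntermediateField.adjoin k (Set.range ((↑) : s → K))) K :=
    Algebra.FormallyEtale.of_isSeparable _ K
  have e4 : Algebra.FormallyEtale (Algebra.adjoin k (Set.range ((↑) : s → K))) K :=
    .comp _ (IntermediateField.adjoin k (Set.range ((↑) : s → K))) _
  have e5 : Algebra.FormallyEtale (MvPolynomial s k) K :=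
    .comp _ (Algebra.adjoin k (Set.range ((↑) : s → K))) _
  let b := ((KaehlerDifferential.mvPolynomialBasis k s).baseChange K).map
    (KaehlerDifferential.tensorKaehlerEquivOfFormallyEtale k (MvPolynomial s k) K)
  rw [rank_eq_card_basis b, ← hs.cardinalMk_eq_trdeg, Cardinal.mk_fintype]

lemma span_D_subfield {k B K : Type u} [Field k] [CommRing B] [Algebra k B] [Field K] [Algebra k K]
    [Algebra B K] [IsScalarTower k B K] (hK : ∀ z : K, ∃ b c : B, z * algebraMap B K c = algebraMap B K b ∧ algebraMap B K c ≠ 0)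
    (g : Set B) (hg : Algebra.adjoin k g = ⊤) :
    Submodule.span K ((fun b => KaehlerDifferential.D k K (algebraMap B K b)) '' g) = ⊤ := by
  set W := Submodule.span K ((fun b => KaehlerDifferential.D k K (algebraMap B K b)) '' g)
  have h1 : ∀ b : B, KaehlerDifferential.D k K (algebraMap B K b) ∈ W := by
    intro b
    have hb : b ∈ Algebra.adjoin k g := by rw [hg]; trivial
    induction hb using Algebra.adjoin_induction with
    | mem x hx => exact Submodule.subset_span ⟨x, hx, rfl⟩
    | algebraMap r => rw [← IsScalarTower.algebraMap_apply]; simp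
    | add x y _ _ hx hy => rw [map_add, map_add]; exact W.add_mem hx hy
    | mul x y _ _ hx hy =>
      rw [map_mul, Derivation.leibniz]
      exact W.add_mem (W.smul_mem _ hy) (W.smul_mem _ hx)
  rw [eq_top_iff, ← KaehlerDifferential.span_range_derivation, Submodule.span_le]
  rintro _ ⟨z, rfl⟩
  obtain ⟨b, c, h, hc⟩ := hK z
  have h2 := congrArg (KaehlerDifferential.D k K) h
  rw [Derivation.leibniz] at h2
  have h3 : (algebraMap B K c) • KaehlerDifferential.D k K z ∈ W := by
    rw [eq_sub_of_add_eq' h2]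
    exact W.sub_mem (h1 _) (W.smul_mem _ (h1 _))
  exact (W.smul_mem_iff hc).1 h3

open TensorProduct

lemma dim_loc_le {A B : Type u} [CommRing A] [CommRing B] [Algebra A B] (M : Submonoid A) [IsLocalization M B] : ringKrullDim B ≤ ringKrullDim A := by
  refine Order.krullDim_le_of_strictMono (PrimeSpectrum.comap (algebraMap A B)) ?_
  have h2 : Function.Injective (PrimeSpectrum.comap (algebraMap A B)) := PrimeSpectrum.localization_comap_injective B M
  refine Monotone.strictMono_of_injective ?_ h2
  intro p q h
  exact Ideal.comap_mono h

lemma etale_n_le {k B : Type u} [Field k] [CommRing B] [Nontrivial B] [Algebra k B] [Algebra.FiniteType k B]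
    (d n : ℕ) (hd : ringKrullDim B ≤ d) [Algebra (MvPolynomial (Fin n) k) B] [IsScalarTower k (MvPolynomial (Fin n) k) B]
    [Module.Flat (MvPolynomial (Fin n) k) B] : n ≤ d := by
  have inj : Function.Injective (algebraMap (MvPolynomial (Fin n) k) B) := by
    rw [injective_iff_map_eq_zero]
    intro a ha
    by_contra h0
    have h1 := Module.Flat.isSMulRegular_of_isRegular (M := B) (IsRegular.of_ne_zero h0)
    have := h1 (a₁ := (1 : B)) (a₂ := 0) (by simp [Algebra.smul_def, ha])
    exact one_ne_zero this
  obtain ⟨q, hq, -, hd2⟩ := Ideal.exists_le_prime_disjoint (⊥ : Ideal B)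
    ((nonZeroDivisors (MvPolynomial (Fin n) k)).map (algebraMap (MvPolynomial (Fin n) k) B)) (by
      rw [Set.disjoint_left]
      rintro z hz ⟨y, hy, rfl⟩
      simp only [SetLike.mem_coe, Ideal.mem_bot] at hz
      exact nonZeroDivisors.ne_zero hy ((injective_iff_map_eq_zero _).1 inj _ hz))
  have h1 := trdeg_le_dim (k := k) d hd q
  have h2 : AlgebraicIndependent k (fun i : Fin n => algebraMap B q.ResidueField (algebraMap (MvPolynomial (Fin n) k) B (MvPolynomial.X i))) := by
    rw [AlgebraicIndependent, injective_iff_map_eq_zero]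
    intro f hf
    have h3 : (MvPolynomial.aeval fun i : Fin n => algebraMap B q.ResidueField (algebraMap (MvPolynomial (Fin n) k) B (MvPolynomial.X i))) f = algebraMap B q.ResidueField (algebraMap (MvPolynomial (Fin n) k) B f) := by
      let φ : MvPolynomial (Fin n) k →ₐ[k] q.ResidueField := (IsScalarTower.toAlgHom k B q.ResidueField).comp (IsScalarTower.toAlgHom k (MvPolynomial (Fin n) k) B)
      have : φ = MvPolynomial.aeval fun i : Fin n => algebraMap B q.ResidueField (algebraMap (MvPolynomial (Fin n) k) B (MvPolynomial.X i)) := by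
        ext i; simp [φ]
      rw [← this]; rfl
    rw [h3, Ideal.algebraMap_residueField_eq_zero] at hf
    by_contra h0
    exact Set.disjoint_left.1 hd2 hf ⟨f, mem_nonZeroDivisors_of_ne_zero h0, rfl⟩
  have h3 := h2.lift_cardinalMk_le_trdeg
  simp only [Cardinal.mk_fin, Cardinal.lift_natCast, Cardinal.lift_id] at h3
  have := h3.trans (by simpa using h1)
  exact_mod_cast this

lemma point_rank {k A : Type u} [Field k] [CommRing A] [Algebra k A] [Algebra.Smooth k A]
    (d : ℕ) (hd : ringKrullDim A ≤ d) (x : A →ₐ[k] k) (r : ℕ) (ι : Ω[A⁄k] →ₗ[A] (Fin r → A)) :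
    Module.finrank k (Submodule.span k (Set.range fun f : A => fun m => x (ι (KaehlerDifferential.D k A f) m))) ≤ d := by
  have hp : (RingHom.ker x).IsPrime := RingHom.ker_isPrime _
  obtain ⟨f, hf, n, a1, h1, h2⟩ := Algebra.IsSmoothAt.exists_isStandardEtale_mvPolynomial (R := k) (p := RingHom.ker x)
  have hxf : x f ≠ 0 := hf
  let x' : Localization.Away f →ₐ[k] k := IsLocalization.liftAlgHom (M := Submonoid.powers f) (f := x) (by
    rintro ⟨_, N, rfl⟩; simp [hxf])
  have hx' : ∀ a : A, x' (algebraMap A _ a) = x a := fun a => by simp [x']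
  have : Nontrivial (Localization.Away f) := x'.toRingHom.domain_nontrivial
  have hn : n ≤ d := etale_n_le (k := k) (B := Localization.Away f) d n ((dim_loc_le (Submonoid.powers f)).trans hd)
  have hs : Submodule.span (Localization.Away f) (Set.range fun i : Fin n => KaehlerDifferential.D k (Localization.Away f) (algebraMap (MvPolynomial (Fin n) k) _ (MvPolynomial.X i))) = ⊤ := by
    have := ((KaehlerDifferential.mvPolynomialBasis k (Fin n)).baseChange (Localization.Away f)).map
      (KaehlerDifferential.tensorKaehlerEquivOfFormallyEtale k (MvPolynomial (Fin n) k) (Localization.Away f)) |>.span_eq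
    rw [← this]
    congr 2
    ext i
    simp
  -- module structures
  let m1 : Module (Localization.Away f) (Fin r → k) := Module.compHom _ x'.toRingHom
  let m2 : Module A (Fin r → k) := Module.compHom _ x.toRingHom
  have hm1 : ∀ (b : Localization.Away f) (v : Fin r → k), b • v = x' b • v := fun _ _ => rfl
  have hm2 : ∀ (b : A) (v : Fin r → k), b • v = x b • v := fun _ _ => rfl
  have : IsScalarTower A (Localization.Away f) (Fin r → k) := ⟨fun a b v => by
    rw [hm1, hm1, hm2, Algebra.smul_def a b, map_mul, hx', mul_smul]⟩
  let ℓ : Ω[A⁄k] →ₗ[A] (Fin r → k) :=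
    { toFun := fun ω m => x (ι ω m)
      map_add' := fun a b => by ext; simp
      map_smul' := fun a b => by ext; simp [hm2] }
  let L : Ω[Localization.Away f⁄k] →ₗ[Localization.Away f] (Fin r → k) :=
    (ℓ.liftBaseChange (Localization.Away f)).comp (KaehlerDifferential.tensorKaehlerEquivOfFormallyEtale k A (Localization.Away f)).symm.toLinearMap
  have hL : ∀ g : A, L (KaehlerDifferential.D k _ (algebraMap A _ g)) = fun m => x (ι (KaehlerDifferential.D k A g) m) := by
    intro g
    simp only [L, LinearMap.comp_apply, LinearEquiv.coe_coe, KaehlerDifferential.tensorKaehlerEquivOfFormallyEtale_symm_D_algebraMap, LinearMap.liftBaseChange_tmul, one_smul]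
    rfl
  have hle : Submodule.span k (Set.range fun f : A => fun m => x (ι (KaehlerDifferential.D k A f) m)) ≤
      Submodule.span k (Set.range fun i : Fin n => L (KaehlerDifferential.D k (Localization.Away f) (algebraMap (MvPolynomial (Fin n) k) _ (MvPolynomial.X i)))) := by
    rw [Submodule.span_le]
    rintro _ ⟨g, rfl⟩
    simp only [← hL]
    have hall : ∀ ω : Ω[Localization.Away f⁄k], L ω ∈ Submodule.span k (Set.range fun i : Fin n => L (KaehlerDifferential.D k (Localization.Away f) (algebraMap (MvPolynomial (Fin n) k) _ (MvPolynomial.X i)))) := by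
      intro ω
      have : ω ∈ Submodule.span (Localization.Away f) (Set.range fun i : Fin n => KaehlerDifferential.D k (Localization.Away f) (algebraMap (MvPolynomial (Fin n) k) _ (MvPolynomial.X i))) := by rw [hs]; trivial
      induction this using Submodule.span_induction with
      | mem x h => obtain ⟨i, rfl⟩ := h; exact Submodule.subset_span ⟨i, rfl⟩
      | zero => simp
      | add a b _ _ ha hb => rw [map_add]; exact Submodule.add_mem _ ha hb
      | smul a b _ hb => rw [map_smul, hm1]; exact Submodule.smul_mem _ _ hb
    exact hall _
  exact (Submodule.finrank_mono hle).trans ((finrank_range_le_card _).trans (by simpa using hn))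

open TensorProduct

lemma block_rank {K : Type u} [Field K] {r l : ℕ} (a : K) (ha : a ≠ 0) (x : Fin (l+1) → K)
    (hx : x 0 = 1) (lam : Fin 3 → K) (i0 : Fin 3) (hlam : lam i0 = 1)
    (Dx : Fin (l+1) → Fin r → K) (Da : Fin r → K) (hD0 : Dx 0 = 0)
    (G : Matrix (Fin 3 ⊕ Fin r) (Fin 3 × Fin (l+1)) K)
    (h1 : ∀ i' i j, G (Sum.inl i') (i, j) = if i' = i then a * x j else 0)
    (h2 : ∀ m i j, G (Sum.inr m) (i, j) = lam i * (a * Dx j m + x j * Da m)) :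
    Module.finrank K (Submodule.span K (Set.range Dx)) + 3 ≤ G.rank := by
  rw [Matrix.rank_eq_finrank_span_cols]
  set W := Submodule.span K (Set.range G.col) with hW
  have hcol : ∀ p, G.col p ∈ W := fun p => Submodule.subset_span ⟨p, rfl⟩
  let pr : W →ₗ[K] (Fin 3 → K) := (LinearMap.funLeft K K Sum.inl).comp W.subtype
  have hsurj : LinearMap.range pr = ⊤ := by
    rw [eq_top_iff, ← (Pi.basisFun K (Fin 3)).span_eq, Submodule.span_le]
    rintro _ ⟨i, rfl⟩
    refine ⟨a⁻¹ • ⟨_, hcol (i, 0)⟩, ?_⟩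
    ext i'
    simp only [pr, LinearMap.comp_apply, LinearMap.funLeft_apply, map_smul, Submodule.subtype_apply, Matrix.col_apply, Pi.smul_apply, h1, hx, Pi.basisFun_apply, Pi.single_apply]
    split_ifs <;> simp [ha]
  let inj : (Fin r → K) →ₗ[K] (Fin 3 ⊕ Fin r → K) :=
    { toFun := fun v => Sum.elim 0 v
      map_add' := fun u v => by ext (i | i) <;> simp
      map_smul' := fun u v => by ext (i | i) <;> simp }
  have hU : ∀ v ∈ Submodule.span K (Set.range Dx), inj v ∈ W := by
    intro v hv
    induction hv using Submodule.span_induction with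
    | mem v h =>
      obtain ⟨j, rfl⟩ := h
      have h3 : inj (Dx j) = a⁻¹ • (G.col (i0, j) - x j • G.col (i0, 0)) := by
        ext (i | m)
        · simp only [inj, LinearMap.coe_mk, AddHom.coe_mk, Sum.elim_inl, Pi.smul_apply, Pi.sub_apply, Matrix.col_apply, h1, hx]
          split_ifs <;> simp [mul_comm]
        · simp only [inj, LinearMap.coe_mk, AddHom.coe_mk, Sum.elim_inr, Pi.smul_apply, Pi.sub_apply, Matrix.col_apply, h2, hx, hlam, hD0, smul_eq_mul, Pi.zero_apply]
          field_simp
          ring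
      rw [h3]
      exact W.smul_mem _ (W.sub_mem (hcol _) (W.smul_mem _ (hcol _)))
    | zero => simp
    | add u v _ _ hu hv => rw [map_add]; exact W.add_mem hu hv
    | smul c v _ hv => rw [map_smul]; exact W.smul_mem _ hv
  let f : Submodule.span K (Set.range Dx) →ₗ[K] LinearMap.ker pr :=
    { toFun := fun v => ⟨⟨inj v, hU v v.2⟩, by
        ext i; simp [pr, inj, LinearMap.funLeft_apply]⟩
      map_add' := fun u v => by ext; simp
      map_smul' := fun u v => by ext; simp }
  have hf : Function.Injective f := by
    intro u v h
    have h4 : inj u = inj v := congrArg (fun z => z.1.1) h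
    ext m
    exact congrFun h4 (Sum.inr m)
  have h5 := LinearMap.finrank_le_finrank_of_injective hf
  have h6 := LinearMap.finrank_range_add_finrank_ker pr
  rw [hsurj] at h6
  simp only [finrank_top, Module.finrank_fin_fun] at h6
  omega

lemma omega_rank {k A K : Type u} [Field k] [CommRing A] [Algebra k A] [Field K] [Algebra k K]
    [Algebra A K] [IsScalarTower k A K] {r l : ℕ} (ι : Ω[A⁄k] →ₗ[A] (Fin r → A))
    (π : (Fin r → A) →ₗ[A] Ω[A⁄k]) (hπ : ∀ ω, π (ι ω) = ω) (x : Fin (l+1) → A) (y : Fin 2 → K)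
    (hspan : Submodule.span K (Set.range (fun j => KaehlerDifferential.D k K (algebraMap A K (x j))) ∪
      Set.range (fun i => KaehlerDifferential.D k K (y i))) = ⊤) :
    Module.rank K Ω[K⁄k] ≤ ((Module.finrank K (Submodule.span K
      (Set.range fun j => fun m => algebraMap A K (ι (KaehlerDifferential.D k A (x j)) m))) + 2 : ℕ) : Cardinal) := by
  let ψ : (Fin r → K) →ₗ[K] Ω[K⁄k] := Fintype.linearCombination K
    (fun m => KaehlerDifferential.map k k A K (π (Pi.single m 1)))
  have hψ : ∀ w : Fin r → A, ψ (fun m => algebraMap A K (w m)) = KaehlerDifferential.map k k A K (π w) := by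
    intro w
    have h1 : w = ∑ m, w m • (Pi.single m 1 : Fin r → A) := by
      ext m; simp [Finset.sum_apply, Pi.single_apply]
    conv_rhs => rw [h1]
    simp only [ψ, Fintype.linearCombination_apply, map_sum, map_smul, algebraMap_smul]
  set U := Submodule.span K (Set.range fun j => fun m => algebraMap A K (ι (KaehlerDifferential.D k A (x j)) m))
  have hle : (⊤ : Submodule K Ω[K⁄k]) ≤ U.map ψ ⊔ Submodule.span K (Set.range (fun i => KaehlerDifferential.D k K (y i))) := by
    rw [← hspan, Submodule.span_union]
    refine sup_le_sup_right ?_ _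
    rw [Submodule.span_le]
    rintro _ ⟨j, rfl⟩
    refine ⟨_, Submodule.subset_span ⟨j, rfl⟩, ?_⟩
    rw [hψ, hπ, KaehlerDifferential.map_D]
  have htop : U.map ψ ⊔ Submodule.span K (Set.range (fun i => KaehlerDifferential.D k K (y i))) = ⊤ := top_le_iff.1 hle
  have hfin : Module.Finite K Ω[K⁄k] := by
    rw [Module.finite_def, ← htop]
    exact Submodule.FG.sup (Submodule.FG.map _ (IsNoetherian.noetherian U)) (Submodule.fg_span (Set.finite_range _))
  rw [← Module.finrank_eq_rank, Nat.cast_le, ← finrank_top, ← htop]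
  refine (Submodule.finrank_add_le_finrank_add_finrank _ _).trans (add_le_add (Submodule.finrank_map_le _ _) ?_)
  exact (finrank_range_le_card (R := K) (fun i => KaehlerDifferential.D k K (y i))).trans (by simp)

open TensorProduct

lemma resField_frac {B : Type u} [CommRing B] (q : Ideal B) [q.IsPrime] (z : q.ResidueField) :
    ∃ b c : B, z * algebraMap B q.ResidueField c = algebraMap B q.ResidueField b ∧ algebraMap B q.ResidueField c ≠ 0 := by
  obtain ⟨b, c, hc, rfl⟩ := IsFractionRing.div_surjective (A := B ⧸ q) z
  obtain ⟨b, rfl⟩ := Ideal.Quotient.mk_surjective b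
  obtain ⟨c, rfl⟩ := Ideal.Quotient.mk_surjective c
  have h0 : algebraMap (B ⧸ q) q.ResidueField (Ideal.Quotient.mk q c) ≠ 0 := by
    simpa [Ideal.Quotient.eq_zero_iff_mem] using nonZeroDivisors.ne_zero hc
  refine ⟨b, c, ?_, h0⟩
  exact div_mul_cancel₀ _ h0

lemma adjoin_C_X {k A : Type u} [Field k] [CommRing A] [Algebra k A] {l : ℕ} (x : Fin (l+1) → A)
    (hx : Algebra.adjoin k (Set.range x) = ⊤) :
    Algebra.adjoin k (Set.range (fun j => (MvPolynomial.C (x j) : MvPolynomial (Fin 2) A)) ∪ Set.range MvPolynomial.X) = ⊤ := by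
  rw [eq_top_iff]
  rintro f -
  set S := Algebra.adjoin k (Set.range (fun j => (MvPolynomial.C (x j) : MvPolynomial (Fin 2) A)) ∪ Set.range MvPolynomial.X)
  have hC : ∀ a : A, MvPolynomial.C a ∈ S := by
    intro a
    have ha : a ∈ Algebra.adjoin k (Set.range x) := by rw [hx]; trivial
    induction ha using Algebra.adjoin_induction with
    | mem a h => obtain ⟨j, rfl⟩ := h; exact Algebra.subset_adjoin (Or.inl ⟨j, rfl⟩)
    | algebraMap r => exact S.algebraMap_mem r
    | add a b _ _ ha hb => rw [map_add]; exact S.add_mem ha hb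
    | mul a b _ _ ha hb => rw [map_mul]; exact S.mul_mem ha hb
  induction f using MvPolynomial.induction_on with
  | C a => exact hC a
  | add p q hp hq => exact S.add_mem hp hq
  | mul_X p i hp => exact S.mul_mem hp (Algebra.subset_adjoin (Or.inr ⟨i, rfl⟩))

section
variable {k A : Type u} [Field k] [IsAlgClosed k] [CommRing A] [Algebra k A]  [Algebra.FiniteType k A]

lemma geo_ii {r l : ℕ} (ι : Ω[A⁄k] →ₗ[A] (Fin r → A))
    (π : (Fin r → A) →ₗ[A] Ω[A⁄k]) (hπ : ∀ ω, π (ι ω) = ω) (x : Fin (l+1) → A) (hx0 : x 0 = 1)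
    (hx : Algebra.adjoin k (Set.range x) = ⊤) (a : A) (b : Fin 3 → A) (i0 : Fin 3) :
    ∃ f : MvPolynomial (Fin 3 × Fin (l+1)) k, f ≠ 0 ∧ ∀ t : Fin 3 × Fin (l+1) → k, MvPolynomial.eval t f ≠ 0 →
      ∀ x0 : A →ₐ[k] k, x0 a ≠ 0 → (∀ i, x0 (b i + a * ∑ j, t (i, j) • x j) = 0) →
      ∀ lam : Fin 3 → k, lam i0 = 1 → ∑ i, lam i • (fun m => x0 (ι (KaehlerDifferential.D k A (b i + a * ∑ j, t (i, j) • x j)) m)) ≠ 0 := by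
  let lamB : Fin 3 → MvPolynomial (Fin 2) A := Fin.insertNth i0 1 MvPolynomial.X
  let G : Matrix (Fin 3 ⊕ Fin r) (Fin 3 × Fin (l+1)) (MvPolynomial (Fin 2) A) :=
    fun ρ p => Sum.elim (fun i' => if i' = p.1 then MvPolynomial.C (a * x p.2) else 0)
      (fun m => lamB p.1 * MvPolynomial.C (ι (KaehlerDifferential.D k A (a * x p.2)) m)) ρ
  let mm : Fin 3 ⊕ Fin r → MvPolynomial (Fin 2) A :=
    Sum.elim (fun i => MvPolynomial.C (b i)) (fun m => ∑ i, lamB i * MvPolynomial.C (ι (KaehlerDifferential.D k A (b i)) m))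
  suffices hG : ∀ (p : Ideal (MvPolynomial (Fin 2) A)) [p.IsPrime], (⊥ : Ideal (MvPolynomial (Fin 2) A)) ≤ p → MvPolynomial.C a ∉ p → Algebra.trdeg k p.ResidueField < ((G.map (algebraMap (MvPolynomial (Fin 2) A) p.ResidueField)).rank : Cardinal) by
    obtain ⟨f, hf, H⟩ := lemmaG (k := k) (⊥ : Ideal (MvPolynomial (Fin 2) A)) (MvPolynomial.C a) G mm hG
    refine ⟨f, hf, fun t ht x0 ha hc lam hlam h0 => ?_⟩
    let X : MvPolynomial (Fin 2) A →ₐ[k] k :=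
      { toRingHom := MvPolynomial.eval₂Hom x0.toRingHom (fun i => lam (i0.succAbove i))
        commutes' := fun r => by
          change MvPolynomial.eval₂Hom _ _ (MvPolynomial.C (algebraMap k A r)) = _
          simp }
    have hXC : ∀ z : A, X (MvPolynomial.C z) = x0 z := fun z => by
      change MvPolynomial.eval₂Hom _ _ (MvPolynomial.C z) = _
      simp
    have hXl : ∀ i, X (lamB i) = lam i := by
      intro i
      refine Fin.succAboveCases i0 ?_ (fun j => ?_) i
      · simp [lamB, hlam]
      · simp only [lamB, Fin.insertNth_apply_succAbove]
        change MvPolynomial.eval₂Hom _ _ (MvPolynomial.X j) = _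
        simp
    obtain ⟨ρ, hρ⟩ := H t ht X (by simp) (by rw [hXC]; exact ha)
    apply hρ
    rcases ρ with i | m
    · rw [← hc i]
      simp only [G, mm, Sum.elim_inl, hXC, Fintype.sum_prod_type, map_add, map_mul, map_sum, map_smul, smul_eq_mul, Finset.mul_sum]
      rw [Finset.sum_eq_single i]
      · simp only [if_true, hXC, map_mul]
        rw [add_comm]
        congr 1
        exact Finset.sum_congr rfl fun j _ => by ring
      · intro i' _ hi'
        simp [hi'.symm]
      · simp
    · have h1 := congrFun h0 m
      simp only [Finset.sum_apply, Pi.smul_apply, Pi.zero_apply, smul_eq_mul] at h1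
      rw [← h1]
      simp only [G, mm, Sum.elim_inr, map_sum, map_mul, hXC, hXl, Fintype.sum_prod_type]
      rw [← Finset.sum_add_distrib]
      refine Finset.sum_congr rfl fun i _ => ?_
      have h2 : b i + a * ∑ j, t (i, j) • x j = b i + ∑ j, t (i, j) • (a * x j) := by
        rw [Finset.mul_sum]; simp
      rw [h2]
      simp only [map_add, map_sum, Pi.add_apply, Finset.sum_apply, Derivation.map_smul, mul_add, Finset.mul_sum]
      rw [add_comm]
      congr 1
      refine Finset.sum_congr rfl fun j _ => ?_
      rw [← algebraMap_smul A (t (i,j)) (KaehlerDifferential.D k A (a * x j)), map_smul, Pi.smul_apply, smul_eq_mul, map_mul x0, AlgHom.commutes]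
      simp only [Algebra.algebraMap_self, RingHom.id_apply]
      ring
  · intro q hq1 hq2 hqa
    have ha : algebraMap A q.ResidueField a ≠ 0 := by
      rw [IsScalarTower.algebraMap_apply A (MvPolynomial (Fin 2) A), Ne, Ideal.algebraMap_residueField_eq_zero]
      exact hqa
    have hAC : ∀ z : A, algebraMap (MvPolynomial (Fin 2) A) q.ResidueField (MvPolynomial.C z) = algebraMap A q.ResidueField z := fun z => (IsScalarTower.algebraMap_apply A (MvPolynomial (Fin 2) A) _ z).symm
    have h1 := block_rank (algebraMap A q.ResidueField a) ha (fun j => algebraMap A q.ResidueField (x j)) (by simp [hx0])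
      (fun i => algebraMap (MvPolynomial (Fin 2) A) q.ResidueField (lamB i)) i0 (by simp [lamB])
      (fun j m => algebraMap A q.ResidueField (ι (KaehlerDifferential.D k A (x j)) m))
      (fun m => algebraMap A q.ResidueField (ι (KaehlerDifferential.D k A a) m))
      (by ext; simp [hx0]) (G.map (algebraMap _ q.ResidueField)) (by
        intro i' i j
        change algebraMap (MvPolynomial (Fin 2) A) q.ResidueField (if i' = i then MvPolynomial.C (a * x j) else 0) = _
        split_ifs
        · rw [hAC, map_mul]
        · simp) (by
        intro m i j
        change algebraMap (MvPolynomial (Fin 2) A) q.ResidueField (lamB i * MvPolynomial.C (ι (KaehlerDifferential.D k A (a * x j)) m)) = _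
        rw [map_mul, hAC, Derivation.leibniz, map_add, map_smul, map_smul, Pi.add_apply, Pi.smul_apply, Pi.smul_apply, smul_eq_mul, smul_eq_mul, map_add, map_mul, map_mul])
    have h2 := omega_rank ι π hπ (K := q.ResidueField) x (fun i => algebraMap (MvPolynomial (Fin 2) A) q.ResidueField (MvPolynomial.X i)) (by
      rw [← span_D_subfield (k := k) (K := q.ResidueField) (resField_frac q) _ (adjoin_C_X x hx), Set.image_union, ← Set.range_comp, ← Set.range_comp]
      congr 3
      )
    have : Algebra.EssFiniteType k q.ResidueField := Algebra.EssFiniteType.comp k (MvPolynomial (Fin 2) A) _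
    rw [← trdeg_eq_rank_kaehler] at h2
    refine h2.trans_lt ?_
    rw [Nat.cast_lt]
    omega
end

open TensorProduct

lemma exists_point {k A : Type u} [Field k] [IsAlgClosed k] [CommRing A] [Algebra k A] [Algebra.FiniteType k A]
    (m : Ideal A) [hm : m.IsMaximal] : ∃ x : A →ₐ[k] k, RingHom.ker x = m := by
  letI := Ideal.Quotient.field m
  have : Module.Finite k (A ⧸ m) := finite_of_finite_type_of_isJacobsonRing k (A ⧸ m)
  let φ : (A ⧸ m) →ₐ[k] k := IsAlgClosed.lift
  refine ⟨φ.comp (Ideal.Quotient.mkₐ k m), ?_⟩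
  ext z
  simp only [RingHom.mem_ker, AlgHom.comp_apply]
  have : φ (Ideal.Quotient.mkₐ k m z) = 0 ↔ Ideal.Quotient.mkₐ k m z = 0 := map_eq_zero_iff φ φ.toRingHom.injective
  rw [this]
  simp [Ideal.Quotient.eq_zero_iff_mem]

lemma exists_point_of_ne_top {k A : Type u} [Field k] [IsAlgClosed k] [CommRing A] [Algebra k A] [Algebra.FiniteType k A]
    (I : Ideal A) (hI : I ≠ ⊤) : ∃ x : A →ₐ[k] k, ∀ z ∈ I, x z = 0 := by
  obtain ⟨m, hm, hle⟩ := Ideal.exists_le_maximal I hI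
  obtain ⟨x, hx⟩ := exists_point (k := k) m
  refine ⟨x, fun z hz => ?_⟩
  have := hle hz
  rw [← hx] at this
  exact this

lemma exists_gens (k A : Type u) [Field k] [CommRing A] [Algebra k A] [Algebra.FiniteType k A] :
    ∃ (l : ℕ) (x : Fin (l+1) → A), x 0 = 1 ∧ Algebra.adjoin k (Set.range x) = ⊤ := by
  obtain ⟨s, hs⟩ := (Algebra.FiniteType.out : (⊤ : Subalgebra k A).FG)
  refine ⟨s.card, Fin.cons 1 (fun i => (s.equivFin.symm i : A)), by simp, ?_⟩
  rw [eq_top_iff, ← hs]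
  refine Algebra.adjoin_mono ?_
  intro z hz
  exact ⟨Fin.succ (s.equivFin ⟨z, hz⟩), by simp⟩

section
variable {k A : Type u} [Field k] [IsAlgClosed k] [CommRing A] [Algebra k A] [Algebra.FiniteType k A]

lemma geo_i {l : ℕ} (x : Fin (l+1) → A) (hx0 : x 0 = 1)
    (hd : ringKrullDim A ≤ 3) (s : A) (hs : s ∈ nonZeroDivisors A) (a : A) (b : Fin 3 → A) :
    ∃ f : MvPolynomial (Fin 3 × Fin (l+1)) k, f ≠ 0 ∧ ∀ t : Fin 3 × Fin (l+1) → k, MvPolynomial.eval t f ≠ 0 →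
      ∀ x0 : A →ₐ[k] k, x0 s = 0 → x0 a ≠ 0 → ¬ (∀ i, x0 (b i + a * ∑ j, t (i, j) • x j) = 0) := by
  let G : Matrix (Fin 3 ⊕ Fin 0) (Fin 3 × Fin (l+1)) A :=
    fun ρ p => Sum.elim (fun i' => if i' = p.1 then (a * x p.2) else 0) Fin.elim0 ρ
  let mm : Fin 3 ⊕ Fin 0 → A := Sum.elim b Fin.elim0
  have hG : ∀ (p : Ideal A) [p.IsPrime], (Ideal.span {s}) ≤ p → a ∉ p → Algebra.trdeg k p.ResidueField < ((G.map (algebraMap A p.ResidueField)).rank : Cardinal) := by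
    intro q _ hq hqa
    have h1 := trdeg_le_dim' (k := k) 2 (by norm_num; exact hd) s hs q (hq (Ideal.mem_span_singleton_self s))
    have h2 := block_rank (r := 0) (algebraMap A q.ResidueField a) (by rwa [Ne, Ideal.algebraMap_residueField_eq_zero]) (fun j => algebraMap A q.ResidueField (x j)) (by simp [hx0])
      1 0 rfl 0 0 rfl (G.map (algebraMap A q.ResidueField)) (by
        intro i' i j
        change algebraMap A q.ResidueField (if i' = i then (a * x j) else 0) = _
        split_ifs <;> simp) (fun m => m.elim0)
    refine h1.trans_lt ?_
    norm_cast
    omega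
  obtain ⟨f, hf, H⟩ := lemmaG (k := k) (Ideal.span {s}) a G mm hG
  refine ⟨f, hf, fun t ht x0 hs0 ha hc => ?_⟩
  obtain ⟨ρ, hρ⟩ := H t ht x0 (by
    intro j hj
    obtain ⟨z, rfl⟩ := Ideal.mem_span_singleton'.1 hj
    simp [hs0]) ha
  rcases ρ with i | m
  · apply hρ
    rw [← hc i]
    simp only [G, mm, Sum.elim_inl, Fintype.sum_prod_type, map_add, map_mul, map_sum, map_smul, smul_eq_mul, Finset.mul_sum]
    rw [Finset.sum_eq_single i]
    · simp only [if_true, map_mul]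
      rw [add_comm]
      congr 1
      exact Finset.sum_congr rfl fun j _ => by ring
    · intro i' _ hi'
      simp [hi'.symm]
    · simp
  · exact m.elim0

lemma exists_eval_ne0 {τ : Type} (f : MvPolynomial τ k) (hf : f ≠ 0) : ∃ t, MvPolynomial.eval t f ≠ 0 := by
  by_contra! h
  have : Infinite k := IsAlgClosed.instInfinite
  exact hf (MvPolynomial.funext fun t => by simpa using h t)

lemma geo_points {r : ℕ} (ι : Ω[A⁄k] →ₗ[A] (Fin r → A))
    (π : (Fin r → A) →ₗ[A] Ω[A⁄k]) (hπ : ∀ ω, π (ι ω) = ω) 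
    (hd : ringKrullDim A ≤ 3) (s : A) (hs : s ∈ nonZeroDivisors A) (a : A) (b : Fin 3 → A) :
    ∃ t : Fin 3 → A, (∀ x0 : A →ₐ[k] k, x0 a ≠ 0 → (∀ i, x0 (b i + a * t i) = 0) → x0 s ≠ 0) ∧
      (∀ x0 : A →ₐ[k] k, x0 a ≠ 0 → (∀ i, x0 (b i + a * t i) = 0) →
        LinearIndependent k (fun i => fun m => x0 (ι (KaehlerDifferential.D k A (b i + a * t i)) m))) := by
  obtain ⟨l, x, hx0, hx⟩ := exists_gens k A
  obtain ⟨f0, hf0, H0⟩ := geo_i (k := k) x hx0 hd s hs a b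
  choose f hf H using fun i0 => geo_ii (k := k) ι π hπ x hx0 hx a b i0
  obtain ⟨t, ht⟩ := exists_eval_ne0 (f0 * ∏ i, f i) (mul_ne_zero hf0 (Finset.prod_ne_zero_iff.2 fun i _ => hf i))
  rw [map_mul, map_prod] at ht
  have ht0 := left_ne_zero_of_mul ht
  have ht1 := fun i => Finset.prod_ne_zero_iff.1 (right_ne_zero_of_mul ht) i (Finset.mem_univ i)
  refine ⟨fun i => ∑ j, t (i, j) • x j, fun x0 ha hc h => H0 t ht0 x0 h ha hc, fun x0 ha hc => ?_⟩
  rw [Fintype.linearIndependent_iff]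
  intro g hg i0
  by_contra h0
  refine H i0 t (ht1 i0) x0 ha hc (fun i => (g i0)⁻¹ * g i) (inv_mul_cancel₀ h0) ?_
  simp only [mul_smul, ← Finset.smul_sum, hg, smul_zero]
end

open TensorProduct

section
variable {k A : Type u} [Field k] [IsAlgClosed k] [CommRing A] [Algebra k A]

lemma sixth_root (C : Type u) [CommRing C] [Algebra k C] [Algebra.EssFiniteType k C] [Algebra.FormallyUnramified k C] (a : C) : ∃ u : C, u ^ 6 = a := by
  have := Algebra.FormallyEtale.of_formallyUnramified_of_field k C
  let e := Algebra.FormallyEtale.equivPiOfIsSepClosed k C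
  choose v hv using fun p => IsAlgClosed.exists_pow_nat_eq (e a p) (n := 6) (by norm_num)
  refine ⟨e.symm v, e.injective ?_⟩
  rw [map_pow, AlgEquiv.apply_symm_apply]
  ext p
  exact hv p

lemma unram_of_points [Algebra.Smooth k A] (hd : ringKrullDim A ≤ 3) {r : ℕ} (ι : Ω[A⁄k] →ₗ[A] (Fin r → A))
    (π : (Fin r → A) →ₗ[A] Ω[A⁄k]) (hπ : ∀ ω, π (ι ω) = ω) (c : Fin 3 → A)
    (H : ∀ x0 : A →ₐ[k] k, (∀ i, x0 (c i) = 0) →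
        LinearIndependent k (fun i => fun m => x0 (ι (KaehlerDifferential.D k A (c i)) m))) :
    Algebra.FormallyUnramified k (A ⧸ Ideal.span (Set.range c)) := by
  set C := A ⧸ Ideal.span (Set.range c)
  constructor
  have key : Module.annihilator C Ω[C⁄k] = ⊤ := by
    by_contra hne
    obtain ⟨m, hm, hle⟩ := Ideal.exists_le_maximal _ hne
    obtain ⟨y, hy⟩ := exists_point (k := k) m
    let x0 : A →ₐ[k] k := y.comp (Ideal.Quotient.mkₐ k _)
    have hx0 : ∀ z, x0 z = y (algebraMap A C z) := fun z => rfl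
    have hc0 : ∀ i, algebraMap A C (c i) = 0 := fun i => Ideal.Quotient.eq_zero_iff_mem.2 (Ideal.subset_span ⟨i, rfl⟩)
    have hc : ∀ i, x0 (c i) = 0 := fun i => by rw [hx0, hc0, map_zero]
    have hli := H x0 hc
    set S := Submodule.span k (Set.range fun f : A => fun m => x0 (ι (KaehlerDifferential.D k A f) m))
    have hS : Module.finrank k S ≤ 3 := point_rank 3 hd x0 r ι
    have hle2 : Submodule.span k (Set.range (fun i => fun m => x0 (ι (KaehlerDifferential.D k A (c i)) m))) ≤ S := by
      refine Submodule.span_mono ?_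
      rintro _ ⟨i, rfl⟩
      exact ⟨c i, rfl⟩
    have heq := Submodule.eq_of_le_of_finrank_le hle2 (by rw [finrank_span_eq_card hli]; simpa using hS)
    have htop : (⊤ : Submodule C Ω[C⁄k]) ≤ m • (⊤ : Submodule C Ω[C⁄k]) := by
      rw [← KaehlerDifferential.span_range_derivation, Submodule.span_le]
      rintro _ ⟨f, rfl⟩
      obtain ⟨f, rfl⟩ := Ideal.Quotient.mk_surjective f
      have hf : (fun m => x0 (ι (KaehlerDifferential.D k A f) m)) ∈ Submodule.span k (Set.range (fun i => fun m => x0 (ι (KaehlerDifferential.D k A (c i)) m))) := by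
        rw [heq]; exact Submodule.subset_span ⟨f, rfl⟩
      obtain ⟨α, hα⟩ := (Submodule.mem_span_range_iff_exists_fun k).1 hf
      let w : Fin r → A := ι (KaehlerDifferential.D k A f - ∑ i, algebraMap k A (α i) • KaehlerDifferential.D k A (c i))
      have hw : ∀ n, x0 (w n) = 0 := by
        intro n
        have := congrFun hα n
        simp only [Finset.sum_apply, Pi.smul_apply, smul_eq_mul] at this
        simp [w, ← this]
      have h1 : KaehlerDifferential.map k k A C (π w) = KaehlerDifferential.D k C (algebraMap A C f) := by
        simp [w, hπ, hc0]
      have h2 : π w = ∑ n, w n • π (Pi.single n 1) := by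
        conv_lhs => rw [show w = ∑ n, w n • (Pi.single n 1 : Fin r → A) from by ext n; simp [Finset.sum_apply, Pi.single_apply]]
        simp
      change KaehlerDifferential.D k C (algebraMap A C f) ∈ _
      rw [← h1, h2, map_sum]
      refine Submodule.sum_mem _ fun n _ => ?_
      rw [map_smul, ← algebraMap_smul C (w n)]
      refine Submodule.smul_mem_smul ?_ (by rw [KaehlerDifferential.span_range_derivation]; trivial)
      rw [← hy, RingHom.mem_ker, ← hx0, hw]
    have hfg : (⊤ : Submodule C Ω[C⁄k]).FG := Module.Finite.fg_top
    obtain ⟨z, hz, hz2⟩ := Submodule.exists_sub_one_mem_and_smul_eq_zero_of_fg_of_le_smul m ⊤ hfg htop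
    have hz3 : z ∈ m := hle (Module.mem_annihilator.2 fun n => hz2 n trivial)
    exact hm.ne_top ((Ideal.eq_top_iff_one _).2 (by simpa using m.sub_mem hz3 hz))
  refine subsingleton_of_forall_eq 0 fun ω => ?_
  have : (1 : C) ∈ Module.annihilator C Ω[C⁄k] := by rw [key]; trivial
  simpa using Module.mem_annihilator.1 this ω

theorem geo [Algebra.Smooth k A] (hd : ringKrullDim A ≤ 3) (s : A) (hs : s ∈ nonZeroDivisors A)
    (a : A) (b : Fin 3 → A) (hu : Ideal.span {a} ⊔ Ideal.span (Set.range b) = ⊤) :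
    ∃ t : Fin 3 → A, Ideal.span (Set.range fun i => b i + a * t i) ⊔ Ideal.span {s} = ⊤ ∧
      ∃ u : A, u ^ 6 - a ∈ Ideal.span (Set.range fun i => b i + a * t i) := by
  obtain ⟨r, π, hπs⟩ := Module.Finite.exists_fin' A Ω[A⁄k]
  obtain ⟨ι, hι⟩ := Module.projective_lifting_property π LinearMap.id hπs
  have hπ : ∀ ω, π (ι ω) = ω := fun ω => LinearMap.congr_fun hι ω
  obtain ⟨t, h1, h2⟩ := geo_points (k := k) ι π hπ hd s hs a b
  have ha : ∀ x0 : A →ₐ[k] k, (∀ i, x0 (b i + a * t i) = 0) → x0 a ≠ 0 := by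
    intro x0 hc h0
    have : Ideal.span {a} ⊔ Ideal.span (Set.range b) ≤ RingHom.ker x0 := by
      rw [sup_le_iff, Ideal.span_le, Ideal.span_le]
      constructor
      · simpa using h0
      · rintro _ ⟨i, rfl⟩
        simpa [h0] using hc i
    rw [hu, top_le_iff] at this
    exact RingHom.ker_ne_top _ this
  refine ⟨t, ?_, ?_⟩
  · by_contra hne
    obtain ⟨x0, hx0⟩ := exists_point_of_ne_top (k := k) _ hne
    have hc : ∀ i, x0 (b i + a * t i) = 0 := fun i => hx0 _ (Ideal.mem_sup_left (Ideal.subset_span ⟨i, rfl⟩))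
    exact h1 x0 (ha x0 hc) hc (hx0 _ (Ideal.mem_sup_right (Ideal.mem_span_singleton_self s)))
  · have := unram_of_points hd ι π hπ (fun i => b i + a * t i) (fun x0 hc => h2 x0 (ha x0 hc) hc)
    obtain ⟨u, hu⟩ := sixth_root (k := k) (A ⧸ Ideal.span (Set.range fun i => b i + a * t i)) (Ideal.Quotient.mk _ a)
    obtain ⟨u, rfl⟩ := Ideal.Quotient.mk_surjective u
    refine ⟨u, ?_⟩
    rw [← Ideal.Quotient.eq_zero_iff_mem, map_sub, map_pow, hu, sub_self]
end

open TensorProduct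

lemma finrank_tensor_field {A : Type u} [CommRing A] {K : Type w} [Field K] [Algebra A K]
    {P : Type v} [AddCommGroup P] [Module A P] [Module.Finite A P] [Module.Flat A P] (N : ℕ)
    (hr : ∀ p, Module.rankAtStalk (R := A) P p = N) : Module.finrank K (K ⊗[A] P) = N := by
  have h1 := Module.rankAtStalk_baseChange (R := A) (M := P) (S := K) ⟨⊥, Ideal.isPrime_bot⟩
  rw [hr, Module.rankAtStalk_eq_finrank_of_free] at h1
  exact h1

lemma exists_split (A : Type u) [CommRing A] (P : Type v) [AddCommGroup P] [Module A P] [Module.Finite A P] [Module.Projective A P] :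
    ∃ (r : ℕ) (i : P →ₗ[A] (Fin r → A)) (π : (Fin r → A) →ₗ[A] P), ∀ p, π (i p) = p := by
  obtain ⟨r, π, hπs⟩ := Module.Finite.exists_fin' A P
  obtain ⟨ι, hι⟩ := Module.projective_lifting_property π LinearMap.id hπs
  exact ⟨r, ι, π, fun ω => LinearMap.congr_fun hι ω⟩

lemma proj_sum {A : Type u} [CommRing A] {P : Type v} [AddCommGroup P] [Module A P] {r : ℕ} (π : (Fin r → A) →ₗ[A] P) (w : Fin r → A) :
    π w = ∑ n, w n • π (Pi.single n 1) := by
  conv_lhs => rw [show w = ∑ n, w n • (Pi.single n 1 : Fin r → A) from by ext n; simp [Finset.sum_apply, Pi.single_apply]]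
  simp

lemma split_rank {A : Type u} [CommRing A] {K : Type w} [Field K] [Algebra A K]
    {P : Type v} [AddCommGroup P] [Module A P] [Module.Finite A P] [Module.Flat A P] (N : ℕ)
    (hr : ∀ p, Module.rankAtStalk (R := A) P p = N) {r : ℕ} (i : P →ₗ[A] (Fin r → A)) (π : (Fin r → A) →ₗ[A] P)
    (hπ : ∀ p, π (i p) = p) (a : A) (ha : algebraMap A K a ≠ 0) (G : Matrix (Fin r) (Fin r) A)
    (hG : ∀ m j, G m j = a * i (π (Pi.single j 1)) m) : N ≤ (G.map (algebraMap A K)).rank := by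
  rw [← finrank_tensor_field (K := K) N hr, Matrix.rank_eq_finrank_span_cols]
  let f : P →ₗ[A] (Fin r → K) := (LinearMap.compLeft (Algebra.linearMap A K) (Fin r)).comp i
  have hf : ∀ p m, f p m = algebraMap A K (i p m) := fun p m => rfl
  let w : K ⊗[A] P →ₗ[K] (Fin r → K) := f.liftBaseChange K
  let ρ : (Fin r → K) →ₗ[K] K ⊗[A] P := Fintype.linearCombination K (fun j => 1 ⊗ₜ π (Pi.single j 1))
  have hρ : ∀ z, ρ (w z) = z := by
    intro z
    induction z using TensorProduct.induction_on with
    | zero => simp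
    | add x y hx hy => rw [map_add, map_add, hx, hy]
    | tmul c p =>
      simp only [w, LinearMap.liftBaseChange_tmul, map_smul]
      conv_rhs => rw [← hπ p, proj_sum π (i p), tmul_sum]
      simp only [ρ, Fintype.linearCombination_apply, Finset.smul_sum, hf]
      refine Finset.sum_congr rfl fun n _ => ?_
      rw [algebraMap_smul, TensorProduct.tmul_smul, smul_comm, TensorProduct.smul_tmul', smul_eq_mul, mul_one]
  have hw : ∀ z, w z ∈ Submodule.span K (Set.range (G.map (algebraMap A K)).col) := by
    intro z
    induction z using TensorProduct.induction_on with
    | zero => simp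
    | add x y hx hy => rw [map_add]; exact Submodule.add_mem _ hx hy
    | tmul c p =>
      simp only [w, LinearMap.liftBaseChange_tmul]
      refine Submodule.smul_mem _ _ ?_
      rw [← hπ p, proj_sum π (i p), map_sum]
      refine Submodule.sum_mem _ fun n _ => ?_
      rw [map_smul]
      have : i p n • f (π (Pi.single n 1)) = (algebraMap A K (i p n) * (algebraMap A K a)⁻¹) • (G.map (algebraMap A K)).col n := by
        ext m
        simp only [Pi.smul_apply, hf, Matrix.col_apply, Matrix.map_apply, hG, map_mul, Algebra.smul_def, smul_eq_mul, Algebra.algebraMap_self, RingHom.id_apply]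
        field_simp
      rw [this]
      exact Submodule.smul_mem _ _ (Submodule.subset_span ⟨n, rfl⟩)
  have hwi : Function.Injective w := Function.LeftInverse.injective hρ
  have hwr : LinearMap.range w ≤ Submodule.span K (Set.range (G.map (algebraMap A K)).col) := by
    rintro _ ⟨z, rfl⟩
    exact hw z
  rw [← LinearMap.finrank_range_of_inj hwi]
  exact Submodule.finrank_mono hwr

/-- order ideal -/
def ordI {A : Type u} [CommRing A] {P : Type v} [AddCommGroup P] [Module A P] (p : P) : Ideal A :=
  LinearMap.range (LinearMap.applyₗ p : (P →ₗ[A] A) →ₗ[A] A)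

lemma bass {k A : Type u} [Field k] [IsAlgClosed k] [CommRing A] [Algebra k A] [Algebra.FiniteType k A]
    {P : Type v} [AddCommGroup P] [Module A P] [Module.Finite A P] [Module.Projective A P] (N : ℕ)
    (hr : ∀ p, Module.rankAtStalk (R := A) P p = N) (J : Ideal A)
    (hJ : ∀ (p : Ideal A) [p.IsPrime], J ≤ p → Algebra.trdeg k p.ResidueField < N)
    (p : P) (a : A) (φ : P × A →ₗ[A] A) (hφ : φ (p, a) = 1) :
    ∃ q : P, ordI (A := A) (p + a • q) ⊔ J = ⊤ := by
  obtain ⟨r, i, π, hπ⟩ := exists_split A P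
  let G : Matrix (Fin r) (Fin r) A := fun m j => a * i (π (Pi.single j 1)) m
  obtain ⟨f, hf, H⟩ := lemmaG (k := k) J a G (i p) (by
    intro q _ hq hqa
    refine (hJ q hq).trans_le ?_
    rw [Nat.cast_le]
    exact split_rank N hr i π hπ a (by rwa [Ne, Ideal.algebraMap_residueField_eq_zero]) G (fun _ _ => rfl))
  obtain ⟨t, ht⟩ := exists_eval_ne0 f hf
  refine ⟨∑ j, algebraMap k A (t j) • π (Pi.single j 1), ?_⟩
  by_contra hne
  obtain ⟨x0, hx0⟩ := exists_point_of_ne_top (k := k) _ hne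
  have hO : ∀ ψ : P →ₗ[A] A, x0 (ψ (p + a • ∑ j, algebraMap k A (t j) • π (Pi.single j 1))) = 0 :=
    fun ψ => hx0 _ (Ideal.mem_sup_left ⟨ψ, rfl⟩)
  by_cases ha : x0 a = 0
  · have h1 := hO (φ.comp (LinearMap.inl A P A))
    rw [map_add, map_smul, smul_eq_mul, map_add, map_mul, ha, zero_mul, add_zero] at h1
    have h2 : φ (p, a) = φ.comp (LinearMap.inl A P A) p + a * φ (0, 1) := by
      have : (p, a) = (p, (0:A)) + a • ((0 : P), (1 : A)) := by simp
      rw [this, map_add, map_smul]; rfl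
    have h3 := congrArg x0 h2
    rw [hφ, map_add, h1, map_mul, ha] at h3
    simp at h3
  · obtain ⟨m, hm⟩ := H t ht x0 (fun j hj => hx0 _ (Ideal.mem_sup_right hj)) ha
    apply hm
    rw [← hO ((LinearMap.proj m).comp i)]
    simp only [G, LinearMap.comp_apply, LinearMap.proj_apply, map_add, map_smul, map_sum, Pi.add_apply, Pi.smul_apply, Finset.sum_apply, smul_eq_mul, map_mul, AlgHom.commutes, Finset.mul_sum]
    rw [add_comm]
    congr 1
    refine Finset.sum_congr rfl fun j _ => ?_
    simp only [Algebra.algebraMap_self, RingHom.id_apply]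
    ring

open TensorProduct

section
variable {A : Type u} [CommRing A] {P : Type v} [AddCommGroup P] [Module A P] {Q : Type w} [AddCommGroup Q] [Module A Q]

def Orb (x y : P × A) : Prop := ∃ e : (P × A) ≃ₗ[A] (P × A), e x = y

lemma Orb.trans {x y z : P × A} (h : Orb x y) (h' : Orb y z) : Orb x z := by
  obtain ⟨e, rfl⟩ := h
  obtain ⟨f, rfl⟩ := h'
  exact ⟨e.trans f, rfl⟩

lemma Orb.symm {x y : P × A} (h : Orb x y) : Orb y x := by
  obtain ⟨e, rfl⟩ := h
  exact ⟨e.symm, by simp⟩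

lemma Orb.unimod {x y : P × A} (h : Orb x y) (hx : ∃ φ : P × A →ₗ[A] A, φ x = 1) : ∃ φ : P × A →ₗ[A] A, φ y = 1 := by
  obtain ⟨e, rfl⟩ := h
  obtain ⟨φ, hφ⟩ := hx
  exact ⟨φ.comp e.symm.toLinearMap, by simpa using hφ⟩

lemma orb_tv1 (p : P) (a : A) (q : P) : Orb (p, a) (p + a • q, a) :=
  ⟨{ toFun := fun x => (x.1 + x.2 • q, x.2)
     invFun := fun x => (x.1 - x.2 • q, x.2)
     map_add' := fun x y => by ext <;> simp [add_smul]; abel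
     map_smul' := fun c x => by ext <;> simp [mul_smul]
     left_inv := fun x => by simp
     right_inv := fun x => by simp }, rfl⟩

lemma orb_tv2 (p : P) (a : A) (φ : P →ₗ[A] A) : Orb (p, a) (p, a + φ p) :=
  ⟨{ toFun := fun x => (x.1, x.2 + φ x.1)
     invFun := fun x => (x.1, x.2 - φ x.1)
     map_add' := fun x y => by ext <;> simp; abel
     map_smul' := fun c x => by ext <;> simp [mul_add]
     left_inv := fun x => by simp
     right_inv := fun x => by simp }, rfl⟩

lemma cancel_one (hT : ∀ x : P × A, (∃ φ : P × A →ₗ[A] A, φ x = 1) → Orb x (0, 1))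
    (f : (Q × A) ≃ₗ[A] (P × A)) : Nonempty (P ≃ₗ[A] Q) := by
  obtain ⟨e, he⟩ := hT (f (0, 1)) ⟨(LinearMap.snd A Q A).comp f.symm.toLinearMap, by simp⟩
  let g : (Q × A) ≃ₗ[A] (P × A) := f.trans e
  have hg : g (0, 1) = (0, 1) := he
  have hg' : g.symm (0, 1) = (0, 1) := (LinearEquiv.symm_apply_eq g).2 hg.symm
  have d1 : ∀ x : P × A, ((x.1, (0 : A)) : P × A) = x - x.2 • ((0 : P), (1 : A)) := fun x => by ext <;> simp
  have d2 : ∀ x : Q × A, ((x.1, (0 : A)) : Q × A) = x - x.2 • ((0 : Q), (1 : A)) := fun x => by ext <;> simp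
  refine ⟨LinearEquiv.ofLinear
    ((LinearMap.fst A Q A).comp (g.symm.toLinearMap.comp (LinearMap.inl A P A)))
    ((LinearMap.fst A P A).comp (g.toLinearMap.comp (LinearMap.inl A Q A))) ?_ ?_⟩
  · ext q
    simp only [LinearMap.comp_apply, LinearMap.inl_apply, LinearMap.fst_apply, LinearEquiv.coe_coe, LinearMap.id_apply]
    rw [d1, map_sub, map_smul, hg']
    simp
  · ext p
    simp only [LinearMap.comp_apply, LinearMap.inl_apply, LinearMap.fst_apply, LinearEquiv.coe_coe, LinearMap.id_apply]
    rw [d2, map_sub, map_smul, hg]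
    simp

lemma orb_of_ordI {p : P} {a : A} (q : P) (h : ordI (A := A) (p + a • q) = ⊤) : Orb (p, a) (0, 1) := by
  have h1 : (1 : A) ∈ ordI (A := A) (p + a • q) := by rw [h]; trivial
  obtain ⟨φ, hφ⟩ := h1
  have hφ : φ (p + a • q) = 1 := hφ
  refine (orb_tv1 p a q).trans ((orb_tv2 _ a ((1 - a) • φ)).trans ?_)
  have h2 : a + ((1 - a) • φ) (p + a • q) = 1 := by
    rw [LinearMap.smul_apply, hφ]; simp
  rw [h2]
  have := orb_tv1 (p + a • q) (1 : A) (-(p + a • q))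
  rwa [one_smul, add_neg_cancel] at this
end

section
variable {A : Type u} [CommRing A]
    {P : Type v} [AddCommGroup P] [Module A P] [Module.Finite A P] [Module.Projective A P]

lemma trans_big (N : ℕ) (d : ℕ) (hd : ringKrullDim A ≤ d) (hdN : d < N)
    (hr : ∀ p, Module.rankAtStalk (R := A) P p = N) (k : Type u) [Field k] [IsAlgClosed k] [Algebra k A] [Algebra.FiniteType k A] :
    ∀ x : P × A, (∃ φ : P × A →ₗ[A] A, φ x = 1) → Orb x (0, 1) := by
  rintro ⟨p, a⟩ ⟨φ, hφ⟩
  obtain ⟨q, hq⟩ := bass (k := k) N hr ⊥ (fun p _ _ => (trdeg_le_dim (k := k) d hd p).trans_lt (by exact_mod_cast hdN)) p a φ hφ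
  rw [sup_bot_eq] at hq
  exact orb_of_ordI q hq
end

section
variable {A : Type u} [CommRing A] [IsNoetherianRing A]
    {P : Type v} [AddCommGroup P] [Module A P] [Module.Finite A P] [Module.Projective A P]

lemma gen_triv (N : ℕ) (hr : ∀ p, Module.rankAtStalk (R := A) P p = N) :
    ∃ (s : A) (α : (Fin N → A) →ₗ[A] P) (β : P →ₗ[A] (Fin N → A)), s ∈ nonZeroDivisors A ∧
      (∀ p, α (β p) = s • p) ∧ (∀ v, β (α v) = s • v) := by
  have : IsNoetherianRing (FractionRing A) := IsLocalization.isNoetherianRing (nonZeroDivisors A) _ inferInstance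
  have : IsFractionRing (FractionRing A) (FractionRing A) := by
    rw [IsFractionRing.self_iff_nonZeroDivisors_eq_isUnit]
    exact IsFractionRing.nonZeroDivisors_eq_isUnit A (FractionRing A)
  obtain ⟨b⟩ := Module.nonempty_basis_of_flat_of_finrank_eq (FractionRing A) (FractionRing A ⊗[A] P) N (by
    intro m
    letI := Ideal.Quotient.field m.1
    refine finrank_tensor_field N (fun p => ?_)
    rw [Module.rankAtStalk_baseChange, hr])
  let e : (FractionRing A ⊗[A] P) ≃ₗ[A] (Fin N → FractionRing A) := b.equivFun.restrictScalars A
  let mk : P →ₗ[A] FractionRing A ⊗[A] P := TensorProduct.mk A (FractionRing A) P 1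
  have : IsLocalizedModule (nonZeroDivisors A) mk := (isLocalizedModule_iff_isBaseChange _ (FractionRing A) _).2 (TensorProduct.isBaseChange A P (FractionRing A))
  let ℓ : (Fin N → A) →ₗ[A] (Fin N → FractionRing A) := LinearMap.compLeft (Algebra.linearMap A (FractionRing A)) (Fin N)
  have hℓl : IsLocalizedModule (nonZeroDivisors A) ℓ := by
    have := IsLocalizedModule.pi (nonZeroDivisors A) (fun _ : Fin N => Algebra.linearMap A (FractionRing A))
    exact this
  have hℓ : Function.Injective ℓ := by
    intro x y h
    ext n
    exact IsFractionRing.injective A (FractionRing A) (congrFun h n)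
  have hmk : Function.Injective mk := by
    obtain ⟨r, i, π, hπ⟩ := exists_split A P
    rw [injective_iff_map_eq_zero]
    intro p hp
    obtain ⟨c, hc⟩ := (IsLocalizedModule.eq_zero_iff (nonZeroDivisors A) mk).1 hp
    have h1 : i p = 0 := by
      ext n
      have h2 : c.1 * i p n = 0 := by
        have := congrFun (congrArg i hc) n
        rw [Submonoid.smul_def, map_smul] at this
        simpa using this
      exact (mul_left_mem_nonZeroDivisors_eq_zero_iff c.2).1 h2
    rw [← hπ p, h1, map_zero]
  have : Module.FinitePresentation A P := Module.finitePresentation_of_projective A P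
  obtain ⟨β, s2, hβ⟩ := Module.FinitePresentation.exists_lift_of_isLocalizedModule (nonZeroDivisors A) ℓ (e.toLinearMap.comp mk)
  obtain ⟨α, s1, hα⟩ := Module.FinitePresentation.exists_lift_of_isLocalizedModule (nonZeroDivisors A) mk (e.symm.toLinearMap.comp ℓ)
  have hβ' : ∀ p, ℓ (β p) = s2.1 • e (mk p) := fun p => LinearMap.congr_fun hβ p
  have hα' : ∀ v, mk (α v) = s1.1 • e.symm (ℓ v) := fun p => LinearMap.congr_fun hα p
  refine ⟨s1.1 * s2.1, α, β, mul_mem s1.2 s2.2, fun p => hmk ?_, fun v => hℓ ?_⟩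
  · rw [hα', hβ', map_smul, map_smul, LinearEquiv.symm_apply_apply, mul_smul]
  · rw [hβ', hα', map_smul, map_smul, LinearEquiv.apply_symm_apply, mul_comm, mul_smul]
end

section
variable {A : Type u} [CommRing A] {P : Type v} [AddCommGroup P] [Module A P]
open Matrix

lemma transport (s : A) (α : (Fin 3 → A) →ₗ[A] P) (β : P →ₗ[A] (Fin 3 → A))
      (h1 : ∀ p, α (β p) = s • p) (h2 : ∀ v, β (α v) = s • v)
      (g γ : Matrix (Fin 4) (Fin 4) A) (hg : IsUnit g.det) (hgγ : g = 1 + s • γ) :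
      Orb ((0 : P), (1 : A)) (α (fun i => g i.succ 0), g 0 0) := by
  let αt : (Fin 4 → A) →ₗ[A] P × A := LinearMap.prod (α.comp (LinearMap.funLeft A A Fin.succ)) (LinearMap.proj 0)
  let βt : P × A →ₗ[A] (Fin 4 → A) :=
    { toFun := fun x => Fin.cons (s * x.2) (β x.1)
      map_add' := fun x y => by ext i; refine Fin.cases ?_ (fun j => ?_) i <;> simp [mul_add]
      map_smul' := fun c y => by ext i; refine Fin.cases ?_ (fun j => ?_) i <;> simp [mul_left_comm] }
  have hba : ∀ v, βt (αt v) = s • v := by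
    intro v
    ext i
    refine Fin.cases ?_ (fun j => ?_) i
    · simp [αt, βt]
    · change β (α (LinearMap.funLeft A A Fin.succ v)) j = _
      rw [h2]; rfl
  let γ' : Matrix (Fin 4) (Fin 4) A := -(γ * g⁻¹)
  have hcomm : g * γ = γ * g := by rw [hgγ, add_mul, mul_add]; simp
  have hgi : g * g⁻¹ = 1 := Matrix.mul_nonsing_inv g hg
  have hig : g⁻¹ * g = 1 := Matrix.nonsing_inv_mul g hg
  have k1 : γ + γ' + s • (γ * γ') = 0 := by
    have : γ + γ' + s • (γ * γ') = γ + g * γ' := by rw [hgγ, add_mul]; simp [add_assoc]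
    rw [this]; simp only [γ', mul_neg, ← mul_assoc, hcomm]; rw [mul_assoc, hgi]; simp
  have k2 : γ' + γ + s • (γ' * γ) = 0 := by
    have : γ' + γ + s • (γ' * γ) = γ + γ' * g := by rw [hgγ, mul_add]; simp; abel
    rw [this]; simp only [γ', neg_mul, mul_assoc, hig]; simp
  have key : ∀ (c d : Matrix (Fin 4) (Fin 4) A), c + d + s • (c * d) = 0 → ∀ x : P × A,
      (x + αt (d *ᵥ βt x)) + αt (c *ᵥ βt (x + αt (d *ᵥ βt x))) = x := by
    intro c d h x
    rw [map_add, hba, add_assoc, ← map_add]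
    have : d *ᵥ βt x + c *ᵥ (βt x + s • (d *ᵥ βt x)) = (c + d + s • (c * d)) *ᵥ βt x := by
      rw [Matrix.mulVec_add, Matrix.mulVec_smul, Matrix.mulVec_mulVec, Matrix.add_mulVec, Matrix.add_mulVec, Matrix.smul_mulVec]
      abel
    rw [this, h]
    simp
  refine ⟨{ toFun := fun x => x + αt (γ *ᵥ βt x)
            invFun := fun x => x + αt (γ' *ᵥ βt x)
            map_add' := fun x y => by simp only [map_add, Matrix.mulVec_add]; abel
            map_smul' := fun c x => by simp only [map_smul, Matrix.mulVec_smul, smul_add, RingHom.id_apply]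
            left_inv := key γ' γ k2
            right_inv := key γ γ' k1 }, ?_⟩
  change ((0 : P), (1 : A)) + αt (γ *ᵥ βt (0, 1)) = _
  have e0 : ((0 : P), (1 : A)) = αt (Pi.single 0 1) := by
    ext
    · have : (LinearMap.funLeft A A Fin.succ) (Pi.single 0 1 : Fin 4 → A) = 0 := by
        ext j; simp [LinearMap.funLeft_apply]
      change 0 = α ((LinearMap.funLeft A A Fin.succ) (Pi.single 0 1 : Fin 4 → A))
      rw [this, map_zero]
    · simp [αt]
  have : (α (fun i => g i.succ 0), g 0 0) = αt (g *ᵥ Pi.single 0 1) := by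
    rw [Matrix.mulVec_single_one]; rfl
  rw [this, e0, hba, ← map_add, hgγ, Matrix.add_mulVec, Matrix.one_mulVec, Matrix.mulVec_smul, Matrix.smul_mulVec]
end

section
variable {A : Type u} [CommRing A]

lemma mem_span_range3 (c : Fin 3 → A) (x : A) (h : x ∈ Ideal.span (Set.range c)) : ∃ f : Fin 3 → A, x = ∑ i, f i * c i := by
  obtain ⟨f, hf⟩ := Ideal.mem_span_range_iff_exists_fun.1 h
  exact ⟨f, hf.symm⟩

lemma final_alg (s a u : A) (c : Fin 3 → A)
    (h1 : Ideal.span (Set.range c) ⊔ Ideal.span {s} = ⊤)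
    (h2 : u ^ 6 - a ∈ Ideal.span (Set.range c)) (h3' : s ^ 2 ∣ a - 1)
    (h4 : Ideal.span {a} ⊔ Ideal.span (Set.range c) = ⊤) :
    ∃ (z y0 : A) (f y : Fin 3 → A), z ^ 6 = a + s ^ 2 * ∑ i, f i * c i ∧ s ∣ z - 1 ∧
      z * y0 + s ^ 2 * ∑ i, y i * c i = 1 := by
  set C := Ideal.span (Set.range c) with hC
  have h1' : IsCoprime C (Ideal.span {s ^ 2}) := by
    have : IsCoprime C (Ideal.span {s}) := Ideal.isCoprime_iff_sup_eq.2 h1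
    have := this.pow_right (n := 2)
    rwa [Ideal.span_singleton_pow] at this
  obtain ⟨x, hx, y', hy', hxy⟩ := Submodule.mem_sup.1 ((Ideal.eq_top_iff_one _).1 (Ideal.isCoprime_iff_sup_eq.1 h1'))
  obtain ⟨w, rfl⟩ := Ideal.mem_span_singleton.1 hy'
  have hprod : ∀ r, r ∈ C → s ^ 2 ∣ r → ∃ f : Fin 3 → A, r = s ^ 2 * ∑ i, f i * c i := by
    rintro r hr ⟨t, rfl⟩
    obtain ⟨g, hg⟩ := mem_span_range3 c _ (C.mul_mem_left t hx)
    obtain ⟨f, hf⟩ := mem_span_range3 c _ (C.mul_mem_left w hr)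
    refine ⟨fun i => g i + f i, ?_⟩
    simp only [add_mul, Finset.sum_add_distrib, ← hg, ← hf]
    linear_combination (- s ^ 2 * t) * hxy
  let z := x + s ^ 2 * w * u
  have hz1 : z - 1 = s ^ 2 * (w * (u - 1)) := by simp only [z]; linear_combination hxy
  have hzu : z - u ∈ C := by
    have : z - u = (1 - u) * x := by simp only [z]; linear_combination u * hxy
    rw [this]; exact C.mul_mem_left _ hx
  have hz6 : z ^ 6 - a ∈ C := by
    have : z ^ 6 - a = (z ^ 6 - u ^ 6) + (u ^ 6 - a) := by ring
    rw [this]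
    obtain ⟨d, hd⟩ := sub_dvd_pow_sub_pow z u 6
    exact C.add_mem (by rw [hd]; exact C.mul_mem_right _ hzu) h2
  have hz6' : s ^ 2 ∣ z ^ 6 - a := by
    have : z ^ 6 - a = (z ^ 6 - 1) - (a - 1) := by ring
    rw [this]
    refine dvd_sub ?_ h3'
    have := sub_dvd_pow_sub_pow z 1 6
    rw [one_pow] at this
    exact (Dvd.intro _ hz1.symm).trans this
  obtain ⟨f, hf⟩ := hprod _ hz6 hz6'
  -- z coprime
  have c1 : IsCoprime (Ideal.span {z}) C := by
    rw [Ideal.isCoprime_iff_exists]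
    obtain ⟨p, hp, q, hq, hpq⟩ := Submodule.mem_sup.1 ((Ideal.eq_top_iff_one _).1 h4)
    obtain ⟨r, rfl⟩ := Ideal.mem_span_singleton.1 hp
    refine ⟨z ^ 6 * r, ?_, q - (z ^ 6 - a) * r, C.sub_mem hq (C.mul_mem_right _ hz6), by linear_combination hpq⟩
    exact Ideal.mem_span_singleton.2 ⟨z ^ 5 * r, by ring⟩
  obtain ⟨p, hp, q, hq, hpq⟩ := Ideal.isCoprime_iff_exists.1 c1
  obtain ⟨r, rfl⟩ := Ideal.mem_span_singleton.1 hp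
  -- z r + q = 1, z - s^2 m = 1
  obtain ⟨y, hy⟩ := mem_span_range3 c _ (C.mul_mem_left (-(w * (u - 1))) hq)
  refine ⟨z, r + q, f, y, by linear_combination hf, ?_, ?_⟩
  · exact ⟨s * (w * (u - 1)), by linear_combination hz1⟩
  · rw [← hy]; linear_combination hpq + q * hz1
end

section
variable {A : Type u} [CommRing A]
    {P : Type v} [AddCommGroup P] [Module A P] [Module.Finite A P] [Module.Projective A P]

lemma trans_three (k : Type u) [Field k] [IsAlgClosed k] [Algebra k A] [Algebra.Smooth k A] (hd : ringKrullDim A ≤ 3)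
    (hr : ∀ p, Module.rankAtStalk (R := A) P p = 3) :
    ∀ x : P × A, (∃ φ : P × A →ₗ[A] A, φ x = 1) → Orb x (0, 1) := by
  rintro ⟨p, a⟩ ⟨φ, hφ⟩
  have : IsNoetherianRing A := Algebra.FiniteType.isNoetherianRing k A
  obtain ⟨s, α, β, hs, h1, h2⟩ := gen_triv (P := P) 3 hr
  obtain ⟨q, hq⟩ := bass (k := k) 3 hr (Ideal.span {s}) (fun q _ hsq =>
    (trdeg_le_dim' (k := k) 2 (by norm_num; exact hd) s hs q (hsq (Ideal.mem_span_singleton_self s))).trans_lt (by norm_num)) p a φ hφ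
  set p' := p + a • q with hp'
  have hq2 : IsCoprime (ordI (A := A) p') (Ideal.span {s ^ 2}) := by
    have : IsCoprime (ordI (A := A) p') (Ideal.span {s}) := Ideal.isCoprime_iff_sup_eq.2 hq
    have := this.pow_right (n := 2)
    rwa [Ideal.span_singleton_pow] at this
  obtain ⟨x, ⟨ψ, hψ⟩, y', hy', hxy⟩ := Ideal.isCoprime_iff_exists.1 hq2
  obtain ⟨z, rfl⟩ := Ideal.mem_span_singleton.1 hy'
  have hψ : ψ p' = x := hψ
  subst hψ
  set a' := a + ((1 - a) • ψ) p' with ha'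
  have ha'' : a' = 1 - (1 - a) * (s ^ 2 * z) := by
    rw [ha', LinearMap.smul_apply, smul_eq_mul]; linear_combination (1 - a) * hxy
  set q0 := ((1 - a) * z) • p' with hq0
  have hp'' : p' + a' • (-p') = s ^ 2 • q0 := by
    rw [hq0, ha'', smul_smul, smul_neg, ← sub_eq_add_neg]
    nth_rewrite 1 [← one_smul A p']
    rw [← sub_smul]; congr 1; ring
  have O1 : Orb (p, a) (s ^ 2 • q0, a') := by
    refine (orb_tv1 p a q).trans ((orb_tv2 _ a ((1 - a) • ψ)).trans ?_)
    have := orb_tv1 p' a' (-p')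
    rwa [hp''] at this
  refine O1.trans ?_
  obtain ⟨φ1, hφ1⟩ := O1.unimod ⟨φ, hφ⟩
  have hαb : ∀ v : Fin 3 → A, α (s • v) = s • α v := fun v => map_smul α s v
  have hq0' : s ^ 2 • q0 = α (s • β q0) := by
    rw [hαb, h1, sq, mul_smul]
  set b := β q0 with hb
  have hu : Ideal.span {a'} ⊔ Ideal.span (Set.range b) = ⊤ := by
    rw [Ideal.eq_top_iff_one]
    have e : ((s ^ 2 • q0, a') : P × A) = s • (α b, 0) + a' • (0, 1) := by
      rw [hq0', hαb]; ext <;> simp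
    rw [e, map_add, map_smul, map_smul] at hφ1
    rw [← hφ1, add_comm]
    refine Submodule.add_mem_sup ?_ ?_
    · exact Ideal.mem_span_singleton.2 ⟨_, rfl⟩
    · refine Ideal.mul_mem_left _ _ ?_
      have hF : (φ1.comp ((LinearMap.inl A P A).comp α)) b = φ1 (α b, 0) := rfl
      rw [← hF, LinearMap.pi_apply_eq_sum_univ]
      exact Ideal.sum_mem _ fun i _ => Ideal.mul_mem_right _ _ (Ideal.subset_span ⟨i, rfl⟩)
  obtain ⟨t, ht, u, hut⟩ := geo (k := k) hd s hs a' b hu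
  set c : Fin 3 → A := fun i => b i + a' * t i with hc
  have hcb : α (s • c) = s ^ 2 • q0 + a' • α (s • t) := by
    rw [hq0', ← map_smul α a', ← map_add]; congr 1; ext i; simp [hc]; ring
  have h4 : Ideal.span {a'} ⊔ Ideal.span (Set.range c) = ⊤ := by
    refine top_le_iff.1 (hu.ge.trans (sup_le le_sup_left ?_))
    rw [Ideal.span_le]
    rintro _ ⟨i, rfl⟩
    have : b i = -t i * a' + c i := by simp [hc]; ring
    rw [this]
    exact Submodule.add_mem_sup (Ideal.mul_mem_left _ _ (Ideal.mem_span_singleton_self a')) (Ideal.subset_span ⟨i, rfl⟩)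
  have hsa : s ^ 2 ∣ a' - 1 := ⟨-(1 - a) * z, by rw [ha'']; ring⟩
  obtain ⟨z, y0, f, y, hz6, hz1, hzy⟩ := final_alg s a' u c ht hut hsa h4
  have O2 : Orb (s ^ 2 • q0, a') (α (s • c), z ^ 6) := by
    refine (orb_tv1 _ a' (α (s • t))).trans ?_
    rw [← hcb]
    let F : (Fin 3 → A) →ₗ[A] A := Fintype.linearCombination A f
    have := orb_tv2 (α (s • c)) a' (F.comp β)
    have e : (F.comp β) (α (s • c)) = s ^ 2 * ∑ i, f i * c i := by
      rw [LinearMap.comp_apply, h2, map_smul, map_smul, Fintype.linearCombination_apply, smul_smul, smul_eq_mul, sq]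
      congr 1
      exact Finset.sum_congr rfl fun i _ => mul_comm _ _
    rwa [e, ← hz6] at this
  refine O2.trans (Orb.symm ?_)
  have hy0 : s ∣ y0 - 1 := by
    obtain ⟨m, hm⟩ := hz1
    exact ⟨-(m * y0) - s * ∑ i, y i * c i, by linear_combination hzy - y0 * hm⟩
  obtain ⟨g, γ, hg, hgγ, hcol⟩ := completion_rel s ![z, s * c 0, s * c 1, s * c 2] ![y0, s * y 0, s * y 1, s * y 2]
    (by rw [Fin.sum_univ_three] at hzy; rw [Fin.sum_univ_four]; simp; linear_combination hzy)
    (by intro i; fin_cases i <;> simp [hz1])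
    (by intro i; fin_cases i <;> simp [hy0])
  have := transport s α β h1 h2 g γ hg hgγ
  have e1 : (fun i : Fin 3 => g i.succ 0) = s • c := by
    ext i
    rw [hcol]
    fin_cases i <;> simp
  have e2 : g 0 0 = z ^ 6 := by rw [hcol]; simp
  rwa [e1, e2] at this
end

section
variable {A : Type u} [CommRing A]
lemma rank_of_const {M : Type v} [AddCommGroup M] [Module A M] (r : ℕ) (h : HasConstantRank A M r) (p : PrimeSpectrum A) :
    Module.rankAtStalk (R := A) M p = r := by
  obtain ⟨e⟩ := h p.asIdeal
  rw [Module.rankAtStalk, e.finrank_eq, Module.finrank_fin_fun]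

def prodSucc (M : Type v) [AddCommGroup M] [Module A M] (n : ℕ) :
    (M × (Fin (n + 1) → A)) ≃ₗ[A] ((M × (Fin n → A)) × A) where
  toFun x := ((x.1, fun i => x.2 i.succ), x.2 0)
  invFun x := (x.1.1, Fin.cons x.2 x.1.2)
  map_add' _ _ := rfl
  map_smul' _ _ := rfl
  left_inv x := by
    refine Prod.ext rfl ?_
    exact Fin.cons_self_tail x.2
  right_inv x := rfl

def prodZero (M : Type v) [AddCommGroup M] [Module A M] :
    (M × (Fin 0 → A)) ≃ₗ[A] M where
  toFun x := x.1
  invFun x := (x, 0)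
  map_add' _ _ := rfl
  map_smul' _ _ := rfl
  left_inv x := Prod.ext rfl (Subsingleton.elim _ _)
  right_inv x := rfl

lemma stab_cancel (k : Type u) [Field k] [IsAlgClosed k] [Algebra k A] [Algebra.Smooth k A]
    (hd : ringKrullDim A = 3) (P : Type v) (Q : Type w)
    [AddCommGroup P] [Module A P] [Module.Finite A P] [Module.Projective A P]
    [AddCommGroup Q] [Module A Q] (hr : ∀ p, Module.rankAtStalk (R := A) P p = 3) (n : ℕ)
    (f : (P × (Fin n → A)) ≃ₗ[A] (Q × (Fin n → A))) : Nonempty (P ≃ₗ[A] Q) := by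
  induction n with
  | zero => exact ⟨(prodZero P).symm.trans (f.trans (prodZero Q))⟩
  | succ n ih =>
    have g := (prodSucc (A := A) Q n).symm.trans (f.symm.trans (prodSucc (A := A) P n))
    have : Nontrivial A := by
      by_contra h
      rw [not_nontrivial_iff_subsingleton] at h
      rw [ringKrullDim_eq_bot_of_subsingleton] at hd
      exact absurd hd (by decide)
    obtain ⟨e⟩ : Nonempty ((P × (Fin n → A)) ≃ₗ[A] (Q × (Fin n → A))) := by
      have hr' : ∀ p, Module.rankAtStalk (R := A) (P × (Fin n → A)) p = 3 + n := by
        intro p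
        rw [Module.rankAtStalk_prod, Pi.add_apply, hr, Module.rankAtStalk_eq_finrank_of_free]
        simp
      refine cancel_one ?_ g
      rcases n with _ | n
      · exact trans_three k hd.le (by simpa using hr')
      · exact trans_big (3 + (n + 1)) 3 hd.le (by omega) hr' k
    exact ih e
end

/-- Stably isomorphic rank 3 vector bundles on a smooth affine threefold over an
algebraically closed field of characteristic ≠ 2 are isomorphic. -/
theorem stably_isomorphic_rank_three_implies_isomorphic
    (k : Type u) [Field k] [IsAlgClosed k] (hchar : ringChar k ≠ 2)
    (R : Type u) [CommRing R] [Algebra k R] [Algebra.Smooth k R]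
    (hdim : ringKrullDim R = 3)
    (P Q : Type*)
    [AddCommGroup P] [Module R P] [Module.Finite R P] [Module.Projective R P]
    [AddCommGroup Q] [Module R Q] [Module.Finite R Q] [Module.Projective R Q]
    (hP : HasConstantRank R P 3) (hQ : HasConstantRank R Q 3)
    (hstab : ∃ n : ℕ, Nonempty ((P × (Fin n → R)) ≃ₗ[R] (Q × (Fin n → R)))) :
    Nonempty (P ≃ₗ[R] Q) := by
  obtain ⟨n, ⟨f⟩⟩ := hstab
  exact stab_cancel k hdim P Q (rank_of_const 3 hP) n f
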